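/- arXiv:2602.22838 — 7 statements merged into one kernel-verified Lean document; each statement's English description precedes it below -/
import Mathlib

section
/- The Plurality social choice correspondence is k-augmentation strategyproof for every k ≥ ⌈(n−1)/2⌉; consequently its manipulation potential satisfies Φ(Plur) ≤ ⌈(n−1)/2⌉. -/
open Finset

/-- A strict linear preference order over `m` candidates, encoded as the permutation sending
each candidate to its rank; rank `0` is the most preferred position, so
`c ≻ c'` iff `p c < p c'`. -/
abbrev Pref (m : ℕ) := Equiv.Perm (Fin m)

/-- A profile of `N` voters, each with a strict preference over `m` candidates. -/
abbrev Profile (m N : ℕ) := Fin N → Pref m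

/-- A social choice correspondence: for each number `N` of voters, it maps each `N`-voter
profile to a set of (tied) winners. -/
abbrev SCC (m : ℕ) := (N : ℕ) → Profile m N → Finset (Fin m)

/-- The profile `P` with `k` extra copies of voter `i`'s preference appended. -/
def addCopies {m n : ℕ} (P : Profile m n) (i : Fin n) (k : ℕ) : Profile m (n + k) :=
  fun j => if h : (j : ℕ) < n then P ⟨j, h⟩ else P i

/-- Break a tie among the candidates in `A` using the linear tie-breaking order `τ`:
the winner is the `τ`-maximal (lowest `τ`-rank) element of `A`. -/
noncomputable def tiebreak {m : ℕ} [NeZero m] (τ : Pref m) (A : Finset (Fin m)) : Fin m :=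
  if h : A.Nonempty then τ.symm ((A.image (fun c => τ c)).min' (h.image _)) else 0

/-- `F` is `k`-augmentation strategyproof on `n`-voter profiles: for every tie-breaker `τ`,
profile `P`, voter `i`, and alternative preference `q`, voter `i` weakly prefers the outcome
obtained by adding `k` truthful copies of her vote to the outcome of the manipulation `q`. -/
def kASP (m n : ℕ) [NeZero m] (F : SCC m) (k : ℕ) : Prop :=
  ∀ (τ : Pref m) (P : Profile m n) (i : Fin n) (q : Pref m),
    (P i) (tiebreak τ (F (n + k) (addCopies P i k))) ≤
      (P i) (tiebreak τ (F n (Function.update P i q)))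

/-- The manipulation potential of `F` on `n`-voter profiles: the least `k` such that `F` is
`k'`-augmentation strategyproof for all `k' ≥ k`, and `⊤` (i.e. `∞`) if no such `k` exists. -/
noncomputable def manipPot (m n : ℕ) [NeZero m] (F : SCC m) : ℕ∞ :=
  sInf ((fun k : ℕ => (k : ℕ∞)) '' {k : ℕ | ∀ k' : ℕ, k ≤ k' → kASP m n F k'})

/-- The number of voters ranking candidate `c` first. -/
def pluralityScore {m N : ℕ} [NeZero m] (P : Profile m N) (c : Fin m) : ℕ :=
  (Finset.univ.filter (fun i => P i c = 0)).card

/-- Plurality: the winners are the candidates ranked first by the most voters. -/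
def plurality (m : ℕ) [NeZero m] : SCC m := fun _ P =>
  Finset.univ.filter (fun c => ∀ c', pluralityScore P c' ≤ pluralityScore P c)

theorem tiebreak_mem {m : ℕ} [NeZero m] (τ : Pref m) (A : Finset (Fin m)) (h : A.Nonempty) :
    tiebreak τ A ∈ A := by
  unfold tiebreak
  rw [dif_pos h]
  have h1 := Finset.min'_mem (A.image (fun c => τ c)) (h.image _)
  obtain ⟨c, hc, he⟩ := Finset.mem_image.1 h1
  rw [← he]
  simpa using hc

theorem plurality_nonempty {m N : ℕ} [NeZero m] (P : Profile m N) :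
    (plurality m N P).Nonempty := by
  obtain ⟨c, -, hc⟩ := Finset.exists_max_image (Finset.univ : Finset (Fin m))
    (fun c => pluralityScore P c) ⟨0, Finset.mem_univ _⟩
  exact ⟨c, by simpa [plurality] using hc⟩

theorem winner_spec {m N : ℕ} [NeZero m] (τ : Pref m) (P : Profile m N) (c : Fin m) :
    pluralityScore P c ≤ pluralityScore P (tiebreak τ (plurality m N P)) := by
  have h := tiebreak_mem τ _ (plurality_nonempty P)
  exact (Finset.mem_filter.1 h).2 c

theorem score_add_le {m N : ℕ} [NeZero m] (P : Profile m N) (c d : Fin m) (h : c ≠ d) :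
    pluralityScore P c + pluralityScore P d ≤ N := by
  unfold pluralityScore
  rw [← Finset.card_union_of_disjoint]
  · exact (Finset.card_le_univ _).trans (by simp)
  · rw [Finset.disjoint_left]
    intro j hj hj2
    simp only [Finset.mem_filter, Finset.mem_univ, true_and] at hj hj2
    exact h ((P j).injective (hj.trans hj2.symm))

theorem score_top {m n : ℕ} [NeZero m] (P : Profile m n) (i : Fin n) (k : ℕ) (t : Fin m)
    (ht : P i t = 0) : k + 1 ≤ pluralityScore (addCopies P i k) t := by
  have hsub : insert (Fin.castAdd k i) (Finset.univ.image (Fin.natAdd n : Fin k → Fin (n + k))) ⊆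
      Finset.univ.filter (fun j => addCopies P i k j t = 0) := by
    intro j hj
    simp only [Finset.mem_insert, Finset.mem_image, Finset.mem_univ, true_and] at hj
    refine Finset.mem_filter.2 ⟨Finset.mem_univ _, ?_⟩
    rcases hj with rfl | ⟨a, rfl⟩ <;> simp [addCopies, ht]
  have := Finset.card_le_card hsub
  rw [Finset.card_insert_of_notMem, Finset.card_image_of_injective _ (Fin.natAdd_injective k n)]
    at this
  · simpa [pluralityScore] using this
  · simp only [Finset.mem_image, Finset.mem_univ, true_and, not_exists]
    intro a ha
    have := congrArg Fin.val ha
    simp at this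
    omega

theorem score_other {m n : ℕ} [NeZero m] (P : Profile m n) (i : Fin n) (k : ℕ) (q : Pref m)
    (w : Fin m) (hw : P i w ≠ 0) :
    pluralityScore (addCopies P i k) w ≤ pluralityScore (Function.update P i q) w := by
  have hsub : Finset.univ.filter (fun j => addCopies P i k j w = 0) ⊆
      (Finset.univ.filter (fun j => Function.update P i q j w = 0)).image (Fin.castAdd k) := by
    intro j hj
    replace hj := (Finset.mem_filter.1 hj).2
    unfold addCopies at hj
    split_ifs at hj with h
    · refine Finset.mem_image.2 ⟨⟨j, h⟩, ?_, by ext; simp⟩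
      have hne : (⟨j, h⟩ : Fin n) ≠ i := by
        rintro he
        rw [he] at hj
        exact hw hj
      simp [Function.update_of_ne hne, hj]
    · exact absurd hj hw
  exact (Finset.card_le_card hsub).trans Finset.card_image_le

theorem plurality_kASP_aux (m n : ℕ) [NeZero m] (k : ℕ) (hk : n / 2 ≤ k) :
    kASP m n (plurality m) k := by
  intro τ P i q
  have h1 := winner_spec τ (addCopies P i k)
  have h2 := winner_spec τ (Function.update P i q)
  generalize tiebreak τ (plurality m (n + k) (addCopies P i k)) = w at *
  generalize tiebreak τ (plurality m n (Function.update P i q)) = z at *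
  by_cases hw : P i w = 0
  · rw [hw]; exact Fin.zero_le _
  by_cases hz : w = z
  · rw [hz]
  exfalso
  have a := score_top P i k ((P i).symm 0) (by simp)
  have b := h1 ((P i).symm 0)
  have c := score_other P i k q w hw
  have d := h2 w
  have e := score_add_le (Function.update P i q) w z hz
  omega

/-- Plurality is `k`-augmentation strategyproof for every
`k ≥ ⌈(n−1)/2⌉`; consequently `Φ(Plur) ≤ ⌈(n−1)/2⌉`. -/
theorem plurality_kASP_of_le (m n : ℕ) [NeZero m] (hm : 3 ≤ m) (hn : 2 ≤ n) :
    (∀ k : ℕ, (n - 1 + 1) / 2 ≤ k → kASP m n (plurality m) k) ∧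
      manipPot m n (plurality m) ≤ (((n - 1 + 1) / 2 : ℕ) : ℕ∞) := by
  have key : ∀ k : ℕ, (n - 1 + 1) / 2 ≤ k → kASP m n (plurality m) k := fun k hk =>
    plurality_kASP_aux m n k (by omega)
  exact ⟨key, sInf_le ⟨_, key, rfl⟩⟩
end

section
/- Assume m ≥ 4, n ≥ 5, and n−1 is divisible by 4. Then for every integer k with 0 ≤ k < n−1, the Instant Runoff social choice correspondence is not k-augmentation strategyproof: there exist a profile with n voters, a voter i, a manipulation, and a tie-breaker under which the manipulation yields a strictly better outcome for voter i than adding k truthful copies of her vote. Since Instant Runoff is majority-consistent, its manipulation potential is exactly n−1. -/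
open Finset

/-- The number of voters whose most preferred candidate among the remaining set `A` is `c`. -/
def restrScore {m N : ℕ} (P : Profile m N) (A : Finset (Fin m)) (c : Fin m) : ℕ :=
  (Finset.univ.filter (fun i => ∀ c' ∈ A, P i c ≤ P i c')).card

/-- Instant-runoff winners among the remaining candidates `A`, with parallel-universes
tiebreaking: iteratively, some candidate with the fewest first-place votes among `A`
is eliminated, and a candidate wins if it survives under some sequence of eliminations. -/
def irvAux {m N : ℕ} (P : Profile m N) (A : Finset (Fin m)) : Finset (Fin m) :=
  if _h : A.card ≤ 1 then A
  else
    ((A.filter (fun e => ∀ c ∈ A, restrScore P A e ≤ restrScore P A c)).attach).biUnion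
      (fun e => irvAux P (A.erase e.1))
termination_by A.card
decreasing_by
  exact Finset.card_erase_lt_of_mem (Finset.mem_filter.mp e.2).1

/-- Instant Runoff with parallel-universes tiebreaking. -/
def irv (m : ℕ) : SCC m := fun _ P => irvAux P Finset.univ

theorem mem_irvAux_step {m N : ℕ} (P : Profile m N) (A : Finset (Fin m)) (e x : Fin m)
    (hA : 1 < A.card) (he : e ∈ A) (hmin : ∀ c ∈ A, restrScore P A e ≤ restrScore P A c)
    (hx : x ∈ irvAux P (A.erase e)) : x ∈ irvAux P A := by
  rw [irvAux, dif_neg (by omega)]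
  rw [Finset.mem_biUnion]
  exact ⟨⟨e, Finset.mem_filter.mpr ⟨he, hmin⟩⟩, Finset.mem_attach _ _, hx⟩

theorem mem_irvAux_inv {m N : ℕ} (P : Profile m N) (A : Finset (Fin m)) (x : Fin m)
    (hA : 1 < A.card) (hx : x ∈ irvAux P A) :
    ∃ e ∈ A, (∀ c ∈ A, restrScore P A e ≤ restrScore P A c) ∧ x ∈ irvAux P (A.erase e) := by
  rw [irvAux, dif_neg (by omega), Finset.mem_biUnion] at hx
  obtain ⟨⟨e, he⟩, -, h⟩ := hx
  rw [Finset.mem_filter] at he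
  exact ⟨e, he.1, he.2, h⟩

theorem irvAux_small {m N : ℕ} (P : Profile m N) (A : Finset (Fin m)) (hA : A.card ≤ 1) :
    irvAux P A = A := by
  rw [irvAux, dif_pos hA]

theorem irvAux_nonempty {m N : ℕ} (P : Profile m N) (k : ℕ) : ∀ (A : Finset (Fin m)),
    A.card = k → A.Nonempty → (irvAux P A).Nonempty := by
  induction k with
  | zero => intro A h1 h2; simp at h1; simp [h1] at h2
  | succ k ih =>
    intro A h1 h2
    by_cases hA : A.card ≤ 1
    · rwa [irvAux_small P A hA]
    · obtain ⟨e, he, hmin⟩ := Finset.exists_min_image A (restrScore P A) h2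
      have hc := Finset.card_erase_of_mem he
      obtain ⟨x, hx⟩ := ih (A.erase e) (by omega) (by rw [← Finset.card_pos]; omega)
      exact ⟨x, mem_irvAux_step P A e x (by omega) he hmin hx⟩

theorem irvAux_elim {m N : ℕ} (P : Profile m N) (S : Finset (Fin m)) (hS : S.Nonempty)
    (h : ∀ B, S ⊆ B → S ≠ B → ∀ s ∈ S, ∃ e ∈ B, restrScore P B e < restrScore P B s)
    (k : ℕ) : ∀ (A : Finset (Fin m)), A.card = k → S ⊆ A → irvAux P A ⊆ irvAux P S := by
  induction k with
  | zero =>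
    intro A h1 h2
    have := Finset.card_le_card h2
    have := hS.card_pos
    omega
  | succ k ih =>
    intro A h1 h2
    by_cases hSA : S = A
    · rw [hSA]
    intro x hx
    have hlt := Finset.card_lt_card (Finset.ssubset_iff_subset_ne.mpr ⟨h2, hSA⟩)
    have hpos := hS.card_pos
    obtain ⟨e, he, hmin, hx'⟩ := mem_irvAux_inv P A x (by omega) hx
    have heS : e ∉ S := by
      intro hs
      obtain ⟨e', he', hl⟩ := h A h2 hSA e hs
      have := hmin e' he'
      omega
    refine ih (A.erase e) ?_ ?_ hx'
    · rw [Finset.card_erase_of_mem he]; omega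
    · exact Finset.subset_erase.mpr ⟨h2, heS⟩

theorem irvAux_drop {m N : ℕ} (P : Profile m N) (S : Finset (Fin m)) (hS : S.Nonempty)
    (h : ∀ B, S ⊆ B → ∀ e ∈ B, e ∉ S → restrScore P B e = 0)
    (k : ℕ) : ∀ (A : Finset (Fin m)), A.card = k → S ⊆ A → irvAux P S ⊆ irvAux P A := by
  induction k with
  | zero =>
    intro A h1 h2
    have := Finset.card_le_card h2
    have := hS.card_pos
    omega
  | succ k ih =>
    intro A h1 h2
    by_cases hSA : S = A
    · rw [hSA]
    intro x hx
    have hss := Finset.ssubset_iff_subset_ne.mpr ⟨h2, hSA⟩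
    have hlt := Finset.card_lt_card hss
    have hpos := hS.card_pos
    obtain ⟨e, he, heS⟩ := Finset.exists_of_ssubset hss
    refine mem_irvAux_step P A e x (by omega) he (fun c _ => by rw [h A h2 e he heS]; omega) ?_
    refine ih (A.erase e) ?_ ?_ hx
    · rw [Finset.card_erase_of_mem he]; omega
    · exact Finset.subset_erase.mpr ⟨h2, heS⟩

theorem score_add_le_s3 {m N : ℕ} (P : Profile m N) (A : Finset (Fin m)) (x y : Fin m)
    (hx : x ∈ A) (hy : y ∈ A) (hxy : x ≠ y) : restrScore P A x + restrScore P A y ≤ N := by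
  unfold restrScore
  rw [← Finset.card_union_of_disjoint]
  · exact (Finset.card_le_univ _).trans (by simp)
  · rw [Finset.disjoint_filter]
    intro i _ h1 h2
    exact hxy ((P i).injective (le_antisymm (h1 y hy) (h2 x hx)))

theorem irvAux_majority {m N : ℕ} (P : Profile m N) (x : Fin m)
    (h : ∀ A, x ∈ A → N < 2 * restrScore P A x) : irvAux P Finset.univ = {x} := by
  have h1 : irvAux P Finset.univ ⊆ irvAux P {x} := by
    refine irvAux_elim P {x} (by simp) ?_ _ Finset.univ rfl (by simp)
    intro B hB hne s hs
    rw [Finset.mem_singleton] at hs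
    subst hs
    have hss := Finset.ssubset_iff_subset_ne.mpr ⟨hB, hne⟩
    obtain ⟨e, he, hes⟩ := Finset.exists_of_ssubset hss
    have hsB : s ∈ B := hB (by simp)
    refine ⟨e, he, ?_⟩
    have := score_add_le_s3 P B e s he hsB (by simpa using hes)
    have := h B hsB
    omega
  rw [irvAux_small P {x} (by simp)] at h1
  exact (Finset.subset_singleton_iff.mp h1).resolve_left
    (irvAux_nonempty P _ _ rfl ⟨x, by simp⟩).ne_empty

theorem tiebreak_singleton {m : ℕ} [NeZero m] (τ : Pref m) (x : Fin m) :
    tiebreak τ {x} = x := by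
  simp [tiebreak]

theorem tiebreak_top {m : ℕ} [NeZero m] (τ : Pref m) (A : Finset (Fin m)) (x : Fin m)
    (hx : x ∈ A) (h : ∀ y, τ x ≤ τ y) : tiebreak τ A = x := by
  have hA : A.Nonempty := ⟨x, hx⟩
  rw [tiebreak, dif_pos hA, Equiv.symm_apply_eq]
  apply le_antisymm
  · exact Finset.min'_le _ _ (Finset.mem_image_of_mem _ hx)
  · apply Finset.le_min'
    intro y hy
    obtain ⟨z, _, rfl⟩ := Finset.mem_image.mp hy
    exact h z

theorem kASP_large (m n : ℕ) [NeZero m] (k : ℕ) (hk : n ≤ k + 1) : kASP m n (irv m) k := by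
  intro τ P i q
  set x := (P i).symm 0 with hx
  have hmaj : irv m (n + k) (addCopies P i k) = {x} := by
    apply irvAux_majority
    intro A hA
    have : k + 1 ≤ restrScore (addCopies P i k) A x := by
      unfold restrScore
      have hc : (insert (Fin.castAdd k i)
          (Finset.univ.map (Fin.natAddEmb n : Fin k ↪ Fin (n + k)))).card = k + 1 := by
        rw [Finset.card_insert_of_notMem]
        · simp
        · simp only [Finset.mem_map, Finset.mem_univ, true_and, not_exists]
          intro j hj
          have := congrArg Fin.val hj
          simp at this
          omega
      rw [← hc]
      apply Finset.card_le_card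
      intro j hj
      have hP : addCopies P i k j = P i := by
        simp only [Finset.mem_insert, Finset.mem_map, Finset.mem_univ, true_and] at hj
        rcases hj with rfl | ⟨j, rfl⟩
        · simp [addCopies]
        · simp [addCopies]
      simp [hP, hx]
    omega
  rw [hmaj, tiebreak_singleton, hx, Equiv.apply_symm_apply]
  exact Fin.zero_le _

/-- extension of a permutation of the first four candidates -/
def ext4 {m : ℕ} (hm : 4 ≤ m) (σ : Equiv.Perm (Fin 4)) : Pref m :=
  σ.viaFintypeEmbedding (Fin.castLEEmb hm)

theorem ext4_cd {m : ℕ} (hm : 4 ≤ m) (σ : Equiv.Perm (Fin 4)) (i : Fin 4) :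
    ext4 hm σ (Fin.castLE hm i) = Fin.castLE hm (σ i) :=
  Equiv.Perm.viaFintypeEmbedding_apply_image σ (Fin.castLEEmb hm) i

theorem ext4_big {m : ℕ} (hm : 4 ≤ m) (σ : Equiv.Perm (Fin 4)) (y : Fin m) (hy : 4 ≤ y.val) :
    ext4 hm σ y = y := by
  apply Equiv.Perm.viaFintypeEmbedding_apply_notMem_range
  rintro ⟨i, rfl⟩
  have := i.isLt
  simp at hy
  omega

theorem cd_cases {m : ℕ} (hm : 4 ≤ m) (y : Fin m) :
    (∃ i : Fin 4, y = Fin.castLE hm i) ∨ 4 ≤ y.val := by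
  by_cases h : 4 ≤ y.val
  · exact Or.inr h
  · exact Or.inl ⟨⟨y.val, by omega⟩, rfl⟩

theorem ext4_le {m : ℕ} (hm : 4 ≤ m) (σ : Equiv.Perm (Fin 4)) (B : Finset (Fin m)) (x : Fin 4)
    (h : ∀ y : Fin 4, Fin.castLE hm y ∈ B → σ x ≤ σ y) :
    ∀ y ∈ B, ext4 hm σ (Fin.castLE hm x) ≤ ext4 hm σ y := by
  intro y hy
  rcases cd_cases hm y with ⟨i, rfl⟩ | hb
  · rw [ext4_cd, ext4_cd]; exact h i hy
  · rw [ext4_cd, ext4_big hm σ y hb, Fin.le_def]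
    have := (σ x).isLt
    simp
    omega

theorem score_ge {m N : ℕ} (hm : 4 ≤ m) (f : ℕ → Equiv.Perm (Fin 4)) (P : Profile m N)
    (hP : ∀ j, P j = ext4 hm (f j)) (B : Finset (Fin m)) (x : Fin 4) (l u : ℕ) (hu : u ≤ N)
    (h : ∀ j, l ≤ j → j < u → ∀ y : Fin 4, Fin.castLE hm y ∈ B → f j x ≤ f j y) :
    u - l ≤ restrScore P B (Fin.castLE hm x) := by
  unfold restrScore
  rw [← Finset.card_map Fin.valEmbedding, ← Nat.card_Ico]
  apply Finset.card_le_card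
  intro j hj
  rw [Finset.mem_Ico] at hj
  rw [Finset.mem_map]
  refine ⟨⟨j, by omega⟩, ?_, rfl⟩
  rw [Finset.mem_filter]
  refine ⟨Finset.mem_univ _, ?_⟩
  rw [hP]
  exact ext4_le hm _ B x (h j hj.1 hj.2)

theorem score_le {m N : ℕ} (P : Profile m N) (B : Finset (Fin m)) (x : Fin m) (l u : ℕ)
    (h : ∀ j : Fin N, (j.val < l ∨ u ≤ j.val) → ∃ y ∈ B, P j y < P j x) :
    restrScore P B x ≤ u - l := by
  unfold restrScore
  rw [← Finset.card_map Fin.valEmbedding, ← Nat.card_Ico]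
  apply Finset.card_le_card
  intro j hj
  rw [Finset.mem_map] at hj
  obtain ⟨i, hi, rfl⟩ := hj
  rw [Finset.mem_filter] at hi
  rw [Finset.mem_Ico]
  by_contra hc
  obtain ⟨y, hy, hlt⟩ := h i (by simp at hc; omega)
  exact absurd (hi.2 y hy) (not_le.mpr hlt)

theorem score_le4 {m N : ℕ} (hm : 4 ≤ m) (f : ℕ → Equiv.Perm (Fin 4)) (P : Profile m N)
    (hP : ∀ j, P j = ext4 hm (f j)) (B : Finset (Fin m)) (x : Fin 4) (l u : ℕ)
    (h : ∀ j, j < N → (j < l ∨ u ≤ j) → ∃ y : Fin 4, Fin.castLE hm y ∈ B ∧ f j y < f j x) :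
    restrScore P B (Fin.castLE hm x) ≤ u - l := by
  apply score_le
  intro j hj
  obtain ⟨y, hy, hlt⟩ := h j j.isLt hj
  refine ⟨_, hy, ?_⟩
  rw [hP, ext4_cd, ext4_cd]
  exact hlt

/-- c b d a -/
def prefC : Equiv.Perm (Fin 4) := ⟨![3, 1, 0, 2], ![2, 1, 3, 0], by decide, by decide⟩
/-- b d a c -/
def prefB : Equiv.Perm (Fin 4) := ⟨![2, 0, 3, 1], ![1, 3, 0, 2], by decide, by decide⟩
/-- d b c a -/
def prefD : Equiv.Perm (Fin 4) := Equiv.swap 0 3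
/-- b a c d -/
def prefQ : Equiv.Perm (Fin 4) := Equiv.swap 0 1

/-- truthful type by index -/
def tf (t a : ℕ) (j : ℕ) : Equiv.Perm (Fin 4) :=
  if j < 2 * t - a then prefD else if j < 3 * t - a then prefC
  else if j < 4 * t - a then prefB else 1

/-- manipulated type by index -/
def tg (t a : ℕ) (j : ℕ) : Equiv.Perm (Fin 4) :=
  if j = 4 * t then prefQ else tf t a j

/-- the first four candidates in a list -/
def cds {m : ℕ} (hm : 4 ≤ m) (S : Finset (Fin 4)) : Finset (Fin m) := S.map (Fin.castLEEmb hm)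

theorem mem_cds {m : ℕ} (hm : 4 ≤ m) (S : Finset (Fin 4)) (x : Fin 4) :
    Fin.castLE hm x ∈ cds hm S ↔ x ∈ S :=
  Finset.mem_map' (Fin.castLEEmb hm)

theorem cds_erase {m : ℕ} (hm : 4 ≤ m) (S : Finset (Fin 4)) (x : Fin 4) :
    (cds hm S).erase (Fin.castLE hm x) = cds hm (S.erase x) :=
  (Finset.map_erase (Fin.castLEEmb hm) S x).symm

theorem forall_cds {m : ℕ} (hm : 4 ≤ m) (S : Finset (Fin 4)) (p : Fin m → Prop)
    (h : ∀ x ∈ S, p (Fin.castLE hm x)) : ∀ c ∈ cds hm S, p c := by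
  intro c hc
  obtain ⟨x, hx, rfl⟩ := Finset.mem_map.mp hc
  exact h x hx

theorem truth_d {m N : ℕ} (hm : 4 ≤ m) (t a k : ℕ) (ht : 1 ≤ t) (ha : a < t)
    (hak : t ≤ a + k + 1) (hN : N = 4 * t + 1 + k) (h2 : 2 * a + k + 1 ≤ 4 * t)
    (P : Profile m N) (hP : ∀ j, P j = ext4 hm (tf t a j)) :
    Fin.castLE hm 3 ∈ irvAux P Finset.univ := by
  have key : Fin.castLE hm 3 ∈ irvAux P (cds hm {0, 1, 2, 3}) := by
    refine mem_irvAux_step P _ (Fin.castLE hm 1) _ (by simp [cds]) (by simp [mem_cds]) ?_ ?_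
    · have hb : restrScore P (cds hm {0, 1, 2, 3}) (Fin.castLE hm 1)
          ≤ (4 * t - a) - (3 * t - a) := by
        apply score_le4 hm _ P hP
        intro j hj hj'
        simp only [mem_cds]
        unfold tf
        split_ifs
        · exact ⟨3, by decide⟩
        · exact ⟨2, by decide⟩
        · omega
        · exact ⟨0, by decide⟩
      have h0 : N - (4 * t - a) ≤ restrScore P (cds hm {0, 1, 2, 3}) (Fin.castLE hm 0) := by
        apply score_ge hm _ P hP _ _ _ _ le_rfl
        intro j hj hj'
        simp only [mem_cds]
        unfold tf
        split_ifs <;> first | omega | decide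
      have h2' : (3 * t - a) - (2 * t - a)
          ≤ restrScore P (cds hm {0, 1, 2, 3}) (Fin.castLE hm 2) := by
        apply score_ge hm _ P hP _ _ _ _ (by omega)
        intro j hj hj'
        simp only [mem_cds]
        unfold tf
        split_ifs <;> first | omega | decide
      have h3 : (2 * t - a) - 0
          ≤ restrScore P (cds hm {0, 1, 2, 3}) (Fin.castLE hm 3) := by
        apply score_ge hm _ P hP _ _ _ _ (by omega)
        intro j hj hj'
        simp only [mem_cds]
        unfold tf
        split_ifs <;> first | omega | decide
      apply forall_cds
      intro x hx
      fin_cases x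
      · exact le_trans (by omega) h0
      · exact le_rfl
      · exact le_trans (by omega) h2'
      · exact le_trans (by omega) h3
    rw [cds_erase, show ({0, 1, 2, 3} : Finset (Fin 4)).erase 1 = {0, 2, 3} by decide]
    refine mem_irvAux_step P _ (Fin.castLE hm 2) _ (by simp [cds]) (by simp [mem_cds]) ?_ ?_
    · have hb : restrScore P (cds hm {0, 2, 3}) (Fin.castLE hm 2)
          ≤ (3 * t - a) - (2 * t - a) := by
        apply score_le4 hm _ P hP
        intro j hj hj'
        simp only [mem_cds]
        unfold tf
        split_ifs
        · exact ⟨3, by decide⟩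
        · omega
        · exact ⟨3, by decide⟩
        · exact ⟨0, by decide⟩
      have h0 : N - (4 * t - a) ≤ restrScore P (cds hm {0, 2, 3}) (Fin.castLE hm 0) := by
        apply score_ge hm _ P hP _ _ _ _ le_rfl
        intro j hj hj'
        simp only [mem_cds]
        unfold tf
        split_ifs <;> first | omega | decide
      have h3 : (2 * t - a) - 0
          ≤ restrScore P (cds hm {0, 2, 3}) (Fin.castLE hm 3) := by
        apply score_ge hm _ P hP _ _ _ _ (by omega)
        intro j hj hj'
        simp only [mem_cds]
        unfold tf
        split_ifs <;> first | omega | decide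
      apply forall_cds
      intro x hx
      fin_cases x
      · exact le_trans (by omega) h0
      · simp at hx
      · exact le_rfl
      · exact le_trans (by omega) h3
    rw [cds_erase, show ({0, 2, 3} : Finset (Fin 4)).erase 2 = {0, 3} by decide]
    refine mem_irvAux_step P _ (Fin.castLE hm 0) _ (by simp [cds]) (by simp [mem_cds]) ?_ ?_
    · have hb : restrScore P (cds hm {0, 3}) (Fin.castLE hm 0) ≤ N - (4 * t - a) := by
        apply score_le4 hm _ P hP
        intro j hj hj'
        simp only [mem_cds]
        unfold tf
        split_ifs
        · exact ⟨3, by decide⟩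
        · exact ⟨3, by decide⟩
        · exact ⟨3, by decide⟩
        · omega
      have h3 : (4 * t - a) - 0 ≤ restrScore P (cds hm {0, 3}) (Fin.castLE hm 3) := by
        apply score_ge hm _ P hP _ _ _ _ (by omega)
        intro j hj hj'
        simp only [mem_cds]
        unfold tf
        split_ifs <;> first | omega | decide
      apply forall_cds
      intro x hx
      fin_cases x
      · exact le_rfl
      · simp at hx
      · simp at hx
      · exact le_trans (by omega) h3
    rw [cds_erase, show ({0, 3} : Finset (Fin 4)).erase 0 = {3} by decide,
      irvAux_small _ _ (by simp [cds]), mem_cds]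
    decide
  refine irvAux_drop P (cds hm {0, 1, 2, 3}) ⟨_, (mem_cds hm _ 0).2 (by decide)⟩ ?_ _
    Finset.univ rfl (Finset.subset_univ _) key
  intro B hB e he heS
  have : restrScore P B e ≤ 0 - 0 := by
    apply score_le
    intro j _
    have hbig : 4 ≤ e.val := by
      rcases cd_cases hm e with ⟨i, rfl⟩ | h
      · exact absurd ((mem_cds hm _ i).2 (by clear heS he; revert i; decide)) heS
      · exact h
    refine ⟨Fin.castLE hm 0, hB ((mem_cds hm _ 0).2 (by decide)), ?_⟩
    rw [hP, ext4_cd, ext4_big hm _ e hbig, Fin.lt_def]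
    have := (tf t a j 0).isLt
    simp
    omega
  omega

theorem manip_b {m N : ℕ} (hm : 4 ≤ m) (t a : ℕ) (ht : 1 ≤ t) (ha : a < t)
    (hN : N = 4 * t + 1)
    (P : Profile m N) (hP : ∀ j, P j = ext4 hm (tg t a j)) :
    irvAux P Finset.univ = {Fin.castLE hm 1} := by
  have key : irvAux P Finset.univ ⊆ irvAux P (cds hm {1, 2, 3}) := by
    refine irvAux_elim P _ ⟨_, (mem_cds hm _ 1).2 (by decide)⟩ ?_ _ _ rfl
      (Finset.subset_univ _)
    intro B hB hne
    have hss := Finset.ssubset_iff_subset_ne.mpr ⟨hB, hne⟩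
    obtain ⟨e, he, hes⟩ := Finset.exists_of_ssubset hss
    have hin : ∀ x : Fin 4, x ≠ 0 → Fin.castLE hm x ∈ B :=
      fun x hx => hB ((mem_cds hm _ x).2 (by revert x; decide))
    have hsc : restrScore P B e ≤ 4 * t - (4 * t - a) := by
      rcases cd_cases hm e with ⟨i, rfl⟩ | hbig
      · have hi : i = 0 := by
          by_contra hi
          exact hes ((mem_cds hm _ i).2 (by clear hes he; revert i; decide))
        subst hi
        apply score_le4 hm _ P hP
        intro j hj hj'
        unfold tg tf
        split_ifs
        · exact ⟨1, hin 1 (by decide), by decide⟩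
        · exact ⟨3, hin 3 (by decide), by decide⟩
        · exact ⟨2, hin 2 (by decide), by decide⟩
        · exact ⟨1, hin 1 (by decide), by decide⟩
        · omega
      · refine le_trans (score_le P B e 0 0 ?_) (by omega)
        intro j _
        refine ⟨Fin.castLE hm 1, hin 1 (by decide), ?_⟩
        rw [hP, ext4_cd, ext4_big hm _ e hbig, Fin.lt_def]
        have := (tg t a j 1).isLt
        simp
        omega
    intro s hs
    refine ⟨e, he, ?_⟩
    refine lt_of_le_of_lt hsc ?_
    revert s
    apply forall_cds
    intro x hx
    fin_cases x
    · simp at hx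
    · refine lt_of_lt_of_le ?_ (score_ge hm _ P hP B 1 (3 * t - a) (4 * t - a) (by omega) ?_)
      · omega
      · intro j hj hj' y hy
        clear hy
        revert y
        unfold tg tf
        split_ifs <;> first | omega | decide
    · refine lt_of_lt_of_le ?_ (score_ge hm _ P hP B 2 (2 * t - a) (3 * t - a) (by omega) ?_)
      · omega
      · intro j hj hj' y hy
        clear hy
        revert y
        unfold tg tf
        split_ifs <;> first | omega | decide
    · refine lt_of_lt_of_le ?_ (score_ge hm _ P hP B 3 0 (2 * t - a) (by omega) ?_)
      · omega
      · intro j hj hj' y hy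
        clear hy
        revert y
        unfold tg tf
        split_ifs <;> first | omega | decide
  have hsub : irvAux P Finset.univ ⊆ {Fin.castLE hm 1} := by
    intro x hx
    obtain ⟨e, he, hmin, hx⟩ := mem_irvAux_inv P _ x (by simp [cds]) (key hx)
    have he2 : e = Fin.castLE hm 2 := by
      have hc : restrScore P (cds hm {1, 2, 3}) (Fin.castLE hm 2)
          ≤ (3 * t - a) - (2 * t - a) := by
        apply score_le4 hm _ P hP
        intro j hj hj'
        simp only [mem_cds]
        unfold tg tf
        split_ifs
        · exact ⟨1, by decide⟩
        · exact ⟨3, by decide⟩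
        · omega
        · exact ⟨1, by decide⟩
        · exact ⟨1, by decide⟩
      have h1 : N - (3 * t - a) ≤ restrScore P (cds hm {1, 2, 3}) (Fin.castLE hm 1) := by
        apply score_ge hm _ P hP _ _ _ _ le_rfl
        intro j hj hj'
        simp only [mem_cds]
        unfold tg tf
        split_ifs <;> first | omega | decide
      have h3 : (2 * t - a) - 0 ≤ restrScore P (cds hm {1, 2, 3}) (Fin.castLE hm 3) := by
        apply score_ge hm _ P hP _ _ _ _ (by omega)
        intro j hj hj'
        simp only [mem_cds]
        unfold tg tf
        split_ifs <;> first | omega | decide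
      have hm2 := hmin (Fin.castLE hm 2) ((mem_cds hm _ 2).2 (by decide))
      obtain ⟨y, hy, rfl⟩ := Finset.mem_map.mp he
      rw [Fin.castLEEmb_apply] at hm2 ⊢
      fin_cases y
      · simp at hy
      · have := le_trans h1 hm2; omega
      · rfl
      · have := le_trans h3 hm2; omega
    subst he2
    rw [cds_erase, show ({1, 2, 3} : Finset (Fin 4)).erase 2 = {1, 3} by decide] at hx
    obtain ⟨e, he, hmin, hx⟩ := mem_irvAux_inv P _ x (by simp [cds]) hx
    have he2 : e = Fin.castLE hm 3 := by
      have hc : restrScore P (cds hm {1, 3}) (Fin.castLE hm 3) ≤ (2 * t - a) - 0 := by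
        apply score_le4 hm _ P hP
        intro j hj hj'
        simp only [mem_cds]
        unfold tg tf
        split_ifs
        · exact ⟨1, by decide⟩
        · omega
        · exact ⟨1, by decide⟩
        · exact ⟨1, by decide⟩
        · exact ⟨1, by decide⟩
      have h1 : N - (2 * t - a) ≤ restrScore P (cds hm {1, 3}) (Fin.castLE hm 1) := by
        apply score_ge hm _ P hP _ _ _ _ le_rfl
        intro j hj hj'
        simp only [mem_cds]
        unfold tg tf
        split_ifs <;> first | omega | decide
      have hm2 := hmin (Fin.castLE hm 3) ((mem_cds hm _ 3).2 (by decide))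
      obtain ⟨y, hy, rfl⟩ := Finset.mem_map.mp he
      rw [Fin.castLEEmb_apply] at hm2 ⊢
      fin_cases y
      · simp at hy
      · have := le_trans h1 hm2; omega
      · simp at hy
      · rfl
    subst he2
    rw [cds_erase, show ({1, 3} : Finset (Fin 4)).erase 3 = {1} by decide,
      irvAux_small _ _ (by simp [cds])] at hx
    simpa [cds] using hx
  exact (Finset.subset_singleton_iff.mp hsub).resolve_left
    (irvAux_nonempty P _ _ rfl ⟨Fin.castLE hm 1, by simp⟩).ne_empty

theorem not_kASP_small (m n : ℕ) [NeZero m] (hm : 4 ≤ m) (t : ℕ) (ht : 1 ≤ t)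
    (hn : n = 4 * t + 1) (k : ℕ) (hk : k < n - 1) : ¬ kASP m n (irv m) k := by
  subst hn
  intro h
  set a := t - 1 - k with ha
  have hlast : tf t a (4 * t) = 1 := by
    unfold tf
    split_ifs <;> first | omega | rfl
  have h1 := h (ext4 hm prefD) (fun j => ext4 hm (tf t a j)) (Fin.last (4 * t)) (ext4 hm prefQ)
  have hT : Fin.castLE hm 3 ∈ irv m (4 * t + 1 + k)
      (addCopies (fun j : Fin (4 * t + 1) => ext4 hm (tf t a j)) (Fin.last (4 * t)) k) := by
    apply truth_d hm t a k ht (by omega) (by omega) rfl (by omega)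
    intro j
    unfold addCopies
    split_ifs with hj
    · rfl
    · simp only [Fin.val_last, hlast]
      congr 1
      unfold tf
      split_ifs <;> first | omega | rfl
  have hM : irv m (4 * t + 1) (Function.update (fun j : Fin (4 * t + 1) => ext4 hm (tf t a j))
      (Fin.last (4 * t)) (ext4 hm prefQ)) = {Fin.castLE hm 1} := by
    apply manip_b hm t a ht (by omega) rfl
    intro j
    unfold tg
    by_cases hj : j = Fin.last (4 * t)
    · subst hj; simp
    · rw [Function.update_of_ne hj, if_neg]
      intro hv
      exact hj (Fin.ext hv)
  rw [hM, tiebreak_singleton, tiebreak_top _ _ _ hT] at h1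
  · simp only [Fin.val_last, hlast, ext4_cd] at h1
    rw [Fin.le_def] at h1
    simp at h1
  · intro y
    exact ext4_le hm prefD Finset.univ 3 (fun y hy => by clear hy; revert y; decide) y (Finset.mem_univ _)

/-- For `m ≥ 4`, `n ≥ 5` with `4 ∣ n − 1`: Instant Runoff is not
`k`-augmentation strategyproof for any `0 ≤ k < n − 1`, and (being majority-consistent)
its manipulation potential is exactly `n − 1`. -/
theorem irv_manipPot_eq (m n : ℕ) [NeZero m] (hm : 4 ≤ m) (hn : 5 ≤ n)
    (hdvd : 4 ∣ (n - 1)) :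
    (∀ k : ℕ, k < n - 1 → ¬ kASP m n (irv m) k) ∧
      manipPot m n (irv m) = ((n - 1 : ℕ) : ℕ∞) := by
  obtain ⟨t, ht⟩ := hdvd
  have hsmall : ∀ k : ℕ, k < n - 1 → ¬ kASP m n (irv m) k :=
    fun k hk => not_kASP_small m n hm t (by omega) (by omega) k hk
  refine ⟨hsmall, ?_⟩
  unfold manipPot
  apply le_antisymm
  · apply sInf_le
    exact ⟨n - 1, fun k' hk' => kASP_large m n k' (by omega), rfl⟩
  · apply le_sInf
    rintro _ ⟨k, hk, rfl⟩
    by_contra hc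
    rw [not_le] at hc
    simp only at hc
    exact hsmall k (by exact_mod_cast hc) (hk k le_rfl)
end

section
/- The Borda Count social choice correspondence is k-augmentation strategyproof for every k ≥ m−2; consequently its manipulation potential satisfies Φ(Borda) ≤ m−2. -/
open Finset

/-- Borda score of candidate `c`: each voter awards `m - 1 - (rank of c)` points. -/
def bordaScore {m N : ℕ} (P : Profile m N) (c : Fin m) : ℕ :=
  ∑ i : Fin N, (m - 1 - (P i c : ℕ))

/-- Borda Count: the winners are the candidates with maximal Borda score. -/
def borda (m : ℕ) : SCC m := fun _ P =>
  Finset.univ.filter (fun c => ∀ c', bordaScore P c' ≤ bordaScore P c)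

theorem scores_aux {m n : ℕ} (P : Profile m n) (i : Fin n) (q : Pref m) (k : ℕ) :
    ∃ R : Fin m → ℕ,
      (∀ c, bordaScore (Function.update P i q) c = R c + (m - 1 - (q c : ℕ))) ∧
      (∀ c, bordaScore (addCopies P i k) c = R c + (k + 1) * (m - 1 - (P i c : ℕ))) := by
  refine ⟨fun c => ∑ j ∈ Finset.univ.erase i, (m - 1 - (P j c : ℕ)), ?_, ?_⟩
  · intro c
    unfold bordaScore
    rw [← Finset.sum_erase_add _ _ (Finset.mem_univ i)]
    congr 1
    · refine Finset.sum_congr rfl fun j hj => ?_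
      rw [Function.update_of_ne (Finset.ne_of_mem_erase hj)]
    · simp
  · intro c
    unfold bordaScore
    rw [Fin.sum_univ_add]
    have h1 : ∀ j : Fin n, addCopies P i k (Fin.castAdd k j) = P j := by
      intro j; simp [addCopies]
    have h2 : ∀ j : Fin k, addCopies P i k (Fin.natAdd n j) = P i := by
      intro j; simp [addCopies]
    simp only [h1, h2, Finset.sum_const, Finset.card_univ, Fintype.card_fin, smul_eq_mul]
    rw [← Finset.sum_erase_add _ _ (Finset.mem_univ i)]
    ring

theorem tiebreak_borda_aux {m N : ℕ} [NeZero m] (τ : Pref m) (P : Profile m N) :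
    (∀ c, bordaScore P c ≤ bordaScore P (tiebreak τ (borda m N P))) ∧
    (∀ c, (∀ c', bordaScore P c' ≤ bordaScore P c) → τ (tiebreak τ (borda m N P)) ≤ τ c) := by
  have hne : (borda m N P).Nonempty := by
    obtain ⟨c, -, hc⟩ := Finset.exists_max_image Finset.univ (bordaScore P)
      ⟨(0 : Fin m), Finset.mem_univ _⟩
    exact ⟨c, by simpa [borda] using hc⟩
  have ht : tiebreak τ (borda m N P)
      = τ.symm (((borda m N P).image (fun c => τ c)).min' (hne.image _)) := by
    simp [tiebreak, hne]
  constructor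
  · have hm := Finset.min'_mem ((borda m N P).image (fun c => τ c)) (hne.image _)
    obtain ⟨c, hc, hce⟩ := Finset.mem_image.1 hm
    rw [ht, ← hce, Equiv.symm_apply_apply]
    simpa [borda] using hc
  · intro c hc
    rw [ht, Equiv.apply_symm_apply]
    apply Finset.min'_le
    exact Finset.mem_image_of_mem _ (by simpa [borda] using hc)

/-- Borda Count is `k`-augmentation strategyproof for every `k ≥ m − 2`;
consequently `Φ(Borda) ≤ m − 2`. -/
theorem borda_kASP_of_le (m n : ℕ) [NeZero m] (hm : 3 ≤ m) (hn : 2 ≤ n) :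
    (∀ k : ℕ, m - 2 ≤ k → kASP m n (borda m) k) ∧
      manipPot m n (borda m) ≤ ((m - 2 : ℕ) : ℕ∞) := by
  have key : ∀ k : ℕ, m - 2 ≤ k → kASP m n (borda m) k := by
    intro k hk τ P i q
    obtain ⟨R, hR1, hR2⟩ := scores_aux P i q k
    obtain ⟨ha, ha'⟩ := tiebreak_borda_aux τ (addCopies P i k)
    obtain ⟨hb, hb'⟩ := tiebreak_borda_aux τ (Function.update P i q)
    generalize tiebreak τ (borda m (n + k) (addCopies P i k)) = a at *
    generalize tiebreak τ (borda m n (Function.update P i q)) = b at *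
    by_contra hlt
    rw [not_le, Fin.lt_def] at hlt
    have h1 := ha b
    have h2 := hb a
    rw [hR2, hR2] at h1
    rw [hR1, hR1] at h2
    have hpa := (P i a).isLt
    have hqa := (q a).isLt
    have hqb := (q b).isLt
    obtain ⟨d, hd⟩ : ∃ d, m - 1 - (P i b : ℕ) = (m - 1 - (P i a : ℕ)) + 1 + d :=
      ⟨(P i a : ℕ) - (P i b : ℕ) - 1, by omega⟩
    rw [hd] at h1
    have h3 : (k + 1) * (m - 1 - (P i a : ℕ) + 1 + d)
        = (k + 1) * (m - 1 - (P i a : ℕ)) + (k + 1) + (k + 1) * d := by ring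
    rw [h3] at h1
    have e1 : bordaScore (addCopies P i k) b = bordaScore (addCopies P i k) a := by
      rw [hR2, hR2, hd, h3]; omega
    have e2 : bordaScore (Function.update P i q) b = bordaScore (Function.update P i q) a := by
      rw [hR1, hR1]; omega
    have t1 := ha' b (fun c => by rw [e1]; exact ha c)
    have t2 := hb' a (fun c => by rw [← e2]; exact hb c)
    have hab : a = b := τ.injective (le_antisymm t1 t2)
    subst hab
    exact lt_irrefl _ hlt
  exact ⟨key, sInf_le ⟨m - 2, key, rfl⟩⟩
end

section
/- Assume n is even. Then for every integer k with 0 ≤ k < m−2, the Borda Count social choice correspondence is not k-augmentation strategyproof: there exist a profile with n voters, a voter i, a manipulation ≻'_i, and a tie-breaker τ such that Borda_τ(≻'_i, ≻_{−i}) ≻_i Borda_τ(≻ + k(≻_i)). Combined with the matching upper bound, the manipulation potential of Borda Count is exactly m−2. -/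
open Finset

/-- Rank sum. -/
def rkSum {m N : ℕ} (P : Profile m N) (c : Fin m) : ℕ := ∑ i : Fin N, (P i c : ℕ)

lemma score_add_rkSum {m N : ℕ} (P : Profile m N) (c : Fin m) :
    bordaScore P c + rkSum P c = N * (m - 1) := by
  unfold bordaScore rkSum
  rw [← Finset.sum_add_distrib]
  rw [Finset.sum_congr rfl (g := fun _ => m - 1)]
  · simp
  · intro i _
    have := (P i c).isLt
    omega

lemma tiebreak_spec {m : ℕ} [NeZero m] (τ : Pref m) (A : Finset (Fin m)) (h : A.Nonempty) :
    tiebreak τ A ∈ A ∧ ∀ c ∈ A, τ (tiebreak τ A) ≤ τ c := by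
  have e : τ (tiebreak τ A) = (A.image (fun c => τ c)).min' (h.image _) := by
    simp [tiebreak, h]
  constructor
  · have h1 := Finset.min'_mem (A.image (fun c => τ c)) (h.image _)
    rw [← e] at h1
    simpa using h1
  · intro c hc
    rw [e]
    exact Finset.min'_le _ _ (Finset.mem_image_of_mem _ hc)

lemma borda_winner {m N : ℕ} [NeZero m] (τ : Pref m) (P : Profile m N) (c : Fin m) :
    rkSum P (tiebreak τ (borda m N P)) < rkSum P c ∨
      (rkSum P (tiebreak τ (borda m N P)) = rkSum P c ∧ τ (tiebreak τ (borda m N P)) ≤ τ c) := by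
  have hne : (borda m N P).Nonempty := by
    obtain ⟨x, -, hx⟩ := Finset.exists_max_image Finset.univ (bordaScore P) ⟨0, Finset.mem_univ _⟩
    exact ⟨x, by simp only [borda, Finset.mem_filter]; exact ⟨mem_univ _, fun c' => hx c' (mem_univ _)⟩⟩
  obtain ⟨h1, h2⟩ := tiebreak_spec τ _ hne
  have h3 : ∀ c', bordaScore P c' ≤ bordaScore P (tiebreak τ (borda m N P)) := by
    have := h1
    nth_rewrite 2 [borda] at this
    exact (Finset.mem_filter.mp this).2
  have s1 := score_add_rkSum P c
  have s2 := score_add_rkSum P (tiebreak τ (borda m N P))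
  have h4 := h3 c
  rcases Nat.lt_or_ge (rkSum P (tiebreak τ (borda m N P))) (rkSum P c) with h | h
  · exact Or.inl h
  · refine Or.inr ⟨by omega, h2 c ?_⟩
    simp only [borda, Finset.mem_filter]
    refine ⟨mem_univ _, fun c' => (h3 c').trans (by omega)⟩

lemma rkSum_addCopies {m n : ℕ} (P : Profile m n) (i : Fin n) (k : ℕ) (c : Fin m) :
    rkSum (addCopies P i k) c = rkSum P c + k * (P i c : ℕ) := by
  unfold rkSum addCopies
  rw [Fin.sum_univ_add]
  simp

lemma rkSum_update {m n : ℕ} (P : Profile m n) (i : Fin n) (q : Pref m) (c : Fin m) :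
    rkSum (Function.update P i q) c + (P i c : ℕ) = rkSum P c + (q c : ℕ) := by
  unfold rkSum
  rw [← Finset.add_sum_erase _ _ (mem_univ i),
    ← Finset.add_sum_erase univ (fun j => (P j c : ℕ)) (mem_univ i)]
  rw [Finset.sum_congr rfl (g := fun j => (P j c : ℕ))]
  · simp; ring
  · intro j hj
    rw [Function.update_of_ne (Finset.ne_of_mem_erase hj)]

lemma borda_upper (m n : ℕ) [NeZero m] (k : ℕ) (hk : m - 2 ≤ k) : kASP m n (borda m) k := by
  intro τ P i q
  by_contra hlt
  rw [not_le] at hlt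
  set b := tiebreak τ (borda m (n + k) (addCopies P i k)) with hb
  set a := tiebreak τ (borda m n (Function.update P i q)) with ha
  have hB := borda_winner τ (addCopies P i k) a
  have hA := borda_winner τ (Function.update P i q) b
  rw [← hb] at hB
  rw [← ha] at hA
  rw [rkSum_addCopies, rkSum_addCopies] at hB
  have ua := rkSum_update P i q a
  have ub := rkSum_update P i q b
  have hab : a ≠ b := by
    intro h; rw [h] at hlt; exact lt_irrefl _ hlt
  have hτ : τ a ≠ τ b := fun h => hab (τ.injective h)
  have hl : (P i a : ℕ) < (P i b : ℕ) := hlt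
  have hq := (q b).isLt
  obtain ⟨d, hd⟩ := Nat.exists_eq_add_of_lt hl
  rw [hd, Nat.mul_add, Nat.mul_add] at hB
  have hkd : k ≤ k * d + k * 1 := by nlinarith [Nat.zero_le (k * d)]
  rcases hB with hB | ⟨hB, hB'⟩ <;> rcases hA with hA | ⟨hA, hA'⟩
  · omega
  · omega
  · omega
  · exact hτ (le_antisymm hA' hB')

/-- Bad profile. -/
def badPref (m : ℕ) (U : Pref m) (j : ℕ) : Pref m :=
  if j = 1 then U else if Even j then Equiv.refl _ else Fin.revPerm

lemma badPref_sum (m : ℕ) (U : Pref m) (t : ℕ) (c : Fin m) :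
    rkSum (fun j : Fin (2 * t + 2) => badPref m U j) c = (c : ℕ) + (U c : ℕ) + t * (m - 1) := by
  unfold rkSum
  rw [Fin.sum_univ_eq_sum_range (fun j => (badPref m U j c : ℕ))]
  induction t with
  | zero => simp [Finset.sum_range_succ, badPref]
  | succ t ih =>
    rw [show 2 * (t + 1) + 2 = (2 * t + 2) + 1 + 1 by ring, Finset.sum_range_succ,
      Finset.sum_range_succ, ih]
    have e1 : badPref m U (2 * t + 2) = Equiv.refl _ := by
      have : Even (2 * t + 2) := ⟨t + 1, by ring⟩
      simp [badPref, this]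
    have e2 : badPref m U (2 * t + 2 + 1) = Fin.revPerm := by
      have : ¬ Even (2 * t + 2 + 1) := by rw [Nat.not_even_iff_odd]; exact ⟨t + 1, by ring⟩
      simp [badPref, this]
    rw [e1, e2]
    have := c.isLt
    simp only [Equiv.refl_apply, Fin.revPerm_apply, Fin.val_rev]
    rw [Nat.succ_mul]
    omega

lemma exists_U (m k : ℕ) (hk : k + 1 < m) : ∃ U : Pref m, ∀ c : Fin m,
    ((c : ℕ) = 0 → (U c : ℕ) = k + 1) ∧ ((c : ℕ) = 1 → (U c : ℕ) = 0) ∧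
      (c : ℕ) ≤ (U c : ℕ) + 1 := by
  haveI : NeZero m := ⟨by omega⟩
  refine ⟨(Fin.cycleRange ⟨k + 1, hk⟩).symm, fun c => ?_⟩
  obtain ⟨x, rfl⟩ := (Fin.cycleRange ⟨k + 1, hk⟩).surjective c
  rw [Equiv.symm_apply_apply]
  rcases lt_trichotomy x ⟨k + 1, hk⟩ with h | h | h
  · have := Fin.coe_cycleRange_of_lt h
    rw [this]
    refine ⟨by omega, by omega, by omega⟩
  · subst h
    rw [Fin.cycleRange_self]
    simp
  · rw [Fin.cycleRange_of_gt h]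
    have : k + 1 < (x : ℕ) := h
    refine ⟨by omega, by omega, by omega⟩

lemma borda_lower (m n : ℕ) [NeZero m] (hm : 3 ≤ m) (hn : 2 ≤ n) (hne : Even n) (k : ℕ)
    (hk : k < m - 2) : ¬ kASP m n (borda m) k := by
  intro H
  obtain ⟨t, rfl⟩ : ∃ t, n = 2 * t + 2 := by
    obtain ⟨r, hr⟩ := hne
    exact ⟨r - 1, by omega⟩
  obtain ⟨U, hU⟩ := exists_U m k (by omega)
  let z : Fin m := ⟨0, by omega⟩
  let o : Fin m := ⟨1, by omega⟩
  let τ : Pref m := Equiv.swap z o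
  let P : Profile m (2 * t + 2) := fun j => badPref m U j
  have hP0 : P 0 = Equiv.refl _ := by simp [P, badPref]
  have hsum : ∀ c, rkSum P c = (c : ℕ) + (U c : ℕ) + t * (m - 1) := badPref_sum m U t
  have h := H τ P 0 (Equiv.neg (Fin m))
  have hB := borda_winner τ (addCopies P 0 k) o
  have hA := borda_winner τ (Function.update P 0 (Equiv.neg (Fin m))) z
  set b := tiebreak τ (borda m (2 * t + 2 + k) (addCopies P 0 k))
  set a := tiebreak τ (borda m (2 * t + 2) (Function.update P 0 (Equiv.neg (Fin m))))
  rw [rkSum_addCopies, rkSum_addCopies, hsum, hsum, hP0] at hB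
  have ua := rkSum_update P 0 (Equiv.neg (Fin m)) a
  have uz := rkSum_update P 0 (Equiv.neg (Fin m)) z
  rw [hsum, hP0] at ua uz
  rw [hP0] at h
  have hz : (z : ℕ) = 0 := rfl
  have ho : (o : ℕ) = 1 := rfl
  have Uz := (hU z).1 rfl
  have Uo := (hU o).2.1 rfl
  simp only [Equiv.refl_apply, Equiv.neg_apply] at h hB ua uz
  have nz : ((-z : Fin m) : ℕ) = 0 := by
    rw [Fin.val_neg']; simp [z]
  have na : (a : ℕ) ≠ 0 → ((-a : Fin m) : ℕ) = m - a := by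
    intro h0
    rw [Fin.val_neg']
    exact Nat.mod_eq_of_lt (by omega)
  have ha : (a : ℕ) = 0 := by
    by_contra h0
    have := na h0
    have := (hU a).2.2
    have := a.isLt
    rcases hA with hA | ⟨hA, -⟩ <;> omega
  have hb : (b : ℕ) ≠ 0 := by
    intro h0
    have ub := (hU b).1 h0
    have ebz : b = z := Fin.ext h0
    rcases hB with hB | ⟨-, hB⟩
    · rw [ub, Uo, h0, ho] at hB
      omega
    · rw [ebz] at hB
      simp only [τ, Equiv.swap_apply_left, Equiv.swap_apply_right] at hB
      have : (o : ℕ) ≤ (z : ℕ) := hB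
      omega
  have : (b : ℕ) ≤ (a : ℕ) := h
  omega

/-- For even `n`: for every `k < m − 2`, Borda Count is not
`k`-augmentation strategyproof; combined with the matching upper bound,
`Φ(Borda) = m − 2`. -/
theorem borda_manipPot_eq (m n : ℕ) [NeZero m] (hm : 3 ≤ m) (hn : 2 ≤ n)
    (hne : Even n) :
    (∀ k : ℕ, k < m - 2 → ¬ kASP m n (borda m) k) ∧
      manipPot m n (borda m) = ((m - 2 : ℕ) : ℕ∞) := by
  refine ⟨fun k hk => borda_lower m n hm hn hne k hk, ?_⟩
  unfold manipPot
  apply le_antisymm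
  · exact sInf_le ⟨m - 2, fun k' hk' => borda_upper m n k' hk', rfl⟩
  · apply le_sInf
    rintro _ ⟨k, hk, rfl⟩
    by_contra hlt
    have hlt' : k < m - 2 := by
      rw [not_le] at hlt
      exact Nat.cast_lt.mp hlt
    exact borda_lower m n hm hn hne k hlt' (hk k le_rfl)
end

section
/- Let F_s be a positional scoring rule with score vector s satisfying s_1 = s_2. Then for every integer k ≥ 0, F_s is not k-augmentation strategyproof; consequently the manipulation potential of F_s is ∞. -/
open Finset

/-- Total score of candidate `c` under the (1-indexed) scoring vector `s`:
a voter ranking `c` in position `ℓ ∈ {1, …, m}` contributes `s ℓ` points. -/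
noncomputable def posScore {m N : ℕ} (s : ℕ → ℝ) (P : Profile m N) (c : Fin m) : ℝ :=
  ∑ i : Fin N, s ((P i c : ℕ) + 1)

/-- The positional scoring rule with scoring vector `s`: candidates with maximal score win. -/
noncomputable def posRule (m : ℕ) (s : ℕ → ℝ) : SCC m := fun _ P =>
  Finset.univ.filter (fun c => ∀ c', posScore s P c' ≤ posScore s P c)

theorem tiebreak_eq_of_first {m : ℕ} [NeZero m] (τ : Pref m) (A : Finset (Fin m)) (c : Fin m)
    (hc : c ∈ A) (h : ∀ d ∈ A, τ c ≤ τ d) : tiebreak τ A = c := by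
  unfold tiebreak
  have hA : A.Nonempty := ⟨c, hc⟩
  rw [dif_pos hA, Equiv.symm_apply_eq]
  apply le_antisymm
  · exact Finset.min'_le _ _ (Finset.mem_image_of_mem _ hc)
  · apply Finset.le_min'
    intro y hy
    obtain ⟨d, hd, rfl⟩ := Finset.mem_image.1 hy
    exact h d hd

theorem not_kASP_aux (m n : ℕ) [NeZero m] (hm : 3 ≤ m) (hn : 2 ≤ n)
    (s : ℕ → ℝ) (hs1 : s 1 = 1) (hsm : s m = 0)
    (hmono : ∀ j : ℕ, 1 ≤ j → j < m → s (j + 1) ≤ s j)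
    (hs12 : s 1 = s 2) (k : ℕ) : ¬ kASP m n (posRule m s) k := by
  have hle : ∀ j : ℕ, j < m → s (j + 1) ≤ 1 := by
    intro j
    induction j with
    | zero => intro _; simp [hs1]
    | succ j ih =>
      intro hj
      exact (hmono (j + 1) (by omega) hj).trans (ih (by omega))
  have hs2 : s 2 = 1 := by rw [← hs12, hs1]
  obtain ⟨a, ha⟩ : ∃ a : Fin m, (a : ℕ) = 0 := ⟨⟨0, by omega⟩, rfl⟩
  obtain ⟨b, hb⟩ : ∃ b : Fin m, (b : ℕ) = 1 := ⟨⟨1, by omega⟩, rfl⟩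
  obtain ⟨z, hz⟩ : ∃ z : Fin m, (z : ℕ) = m - 1 := ⟨⟨m - 1, by omega⟩, rfl⟩
  have hab : a ≠ b := by intro h; rw [h] at ha; omega
  have haz : a ≠ z := by intro h; rw [h] at ha; omega
  have hub : ∀ (N : ℕ) (P : Profile m N) (c : Fin m), posScore s P c ≤ N := by
    intro N P c
    unfold posScore
    calc ∑ i : Fin N, s ((P i c : ℕ) + 1) ≤ ∑ i : Fin N, (1 : ℝ) :=
          Finset.sum_le_sum fun i _ => hle _ (P i c).isLt
      _ = N := by simp
  intro H
  let i : Fin n := ⟨0, by omega⟩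
  have h := H (Equiv.swap a b) (fun _ => 1) i (Equiv.swap b z)
  have h1 : tiebreak (Equiv.swap a b) (posRule m s (n + k) (addCopies (fun _ => 1) i k)) = b := by
    apply tiebreak_eq_of_first
    · simp only [posRule, Finset.mem_filter, Finset.mem_univ, true_and]
      intro c
      refine (hub _ _ c).trans (le_of_eq ?_)
      simp [posScore, addCopies, hb, hs2]
    · intro d _
      rw [Equiv.swap_apply_right, Fin.le_def, ha]
      exact Nat.zero_le _
  have hsa : posScore s (Function.update (fun _ => (1 : Pref m)) i (Equiv.swap b z)) a = n := by
    unfold posScore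
    rw [Finset.sum_congr rfl (g := fun _ => (1 : ℝ))]
    · simp
    · intro j _
      by_cases hj : j = i
      · subst hj
        rw [Function.update_self, Equiv.swap_apply_of_ne_of_ne hab haz, ha, hs1]
      · rw [Function.update_of_ne hj]
        simp [ha, hs1]
  have hsb : posScore s (Function.update (fun _ => (1 : Pref m)) i (Equiv.swap b z)) b < n := by
    have : (n : ℝ) = ∑ j : Fin n, (1 : ℝ) := by simp
    rw [this]
    unfold posScore
    apply Finset.sum_lt_sum
    · intro j _
      exact hle _ (Fin.isLt _)
    · refine ⟨i, Finset.mem_univ _, ?_⟩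
      rw [Function.update_self, Equiv.swap_apply_left, hz, Nat.sub_add_cancel (by omega), hsm]
      norm_num
  have h2 : tiebreak (Equiv.swap a b)
      (posRule m s n (Function.update (fun _ => 1) i (Equiv.swap b z))) = a := by
    apply tiebreak_eq_of_first
    · simp only [posRule, Finset.mem_filter, Finset.mem_univ, true_and]
      intro c
      rw [hsa]
      exact hub _ _ c
    · intro d hd
      simp only [posRule, Finset.mem_filter, Finset.mem_univ, true_and] at hd
      have hdb : d ≠ b := by
        rintro rfl
        have := hd a
        rw [hsa] at this
        linarith
      rw [Equiv.swap_apply_left, Fin.le_def, hb]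
      by_contra hlt
      have h0 : Equiv.swap a b d = a := by apply Fin.ext; omega
      apply hdb
      rw [Equiv.apply_eq_iff_eq_symm_apply] at h0
      simpa using h0
  rw [h1, h2] at h
  simp only [Equiv.Perm.one_apply, Fin.le_def] at h
  omega

/-- If a positional scoring rule assigns equal scores to the top two
positions (`s 1 = s 2`), then it is not `k`-augmentation strategyproof for any `k ≥ 0`, and
its manipulation potential is `∞`. -/
theorem posRule_manipPot_infinite (m n : ℕ) [NeZero m] (hm : 3 ≤ m) (hn : 2 ≤ n)
    (s : ℕ → ℝ) (hs1 : s 1 = 1) (hsm : s m = 0)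
    (hmono : ∀ j : ℕ, 1 ≤ j → j < m → s (j + 1) ≤ s j)
    (hs12 : s 1 = s 2) :
    (∀ k : ℕ, ¬ kASP m n (posRule m s) k) ∧ manipPot m n (posRule m s) = ⊤ := by
  have hk := not_kASP_aux m n hm hn s hs1 hsm hmono hs12
  refine ⟨hk, ?_⟩
  unfold manipPot
  have : {k : ℕ | ∀ k' : ℕ, k ≤ k' → kASP m n (posRule m s) k'} = ∅ := by
    ext k
    simp only [Set.mem_ofPred_eq, Set.mem_empty_iff_false, iff_false]
    intro h
    exact hk k (h k le_rfl)
  rw [this, Set.image_empty, sInf_empty]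
end

section
/- Let F_s be a positional scoring rule with s_1 ≠ s_2, and assume n is even and n ≥ 2s_2/(1 − s_2). Define, for ℓ ∈ {1, …, m−1}: L_s(1) = 1/(s_1 − s_2) − 1, and for ℓ ≥ 2, L_s(ℓ) = min( 1/(s_ℓ − s_{ℓ+1}) − 1 , min over t ∈ {1, …, ℓ̄} of ⌊((n−2)(s̄↑_2 − s_{m−t+1}) + 1 − s_{m−t})/(s_t − s_{ℓ+1})⌋ ), where 1/(s_ℓ − s_{ℓ+1}) is interpreted as ∞ when s_ℓ = s_{ℓ+1}. Then Φ(F_s) ≥ max over ℓ ∈ {1, …, m−1} of L_s(ℓ); moreover F_s is not k-augmentation strategyproof for any k < max_ℓ L_s(ℓ). -/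
open Finset

/-- `s̄↑_ℓ`: the average of the top `ℓ` scores. -/
noncomputable def upave (s : ℕ → ℝ) (ℓ : ℕ) : ℝ := (∑ j ∈ Finset.Icc 1 ℓ, s j) / (ℓ : ℝ)

/-- `s̄↓_ℓ`: the average of the bottom `ℓ` scores (out of `m`). -/
noncomputable def downave (s : ℕ → ℝ) (m ℓ : ℕ) : ℝ :=
  (∑ j ∈ Finset.Icc (m - ℓ + 1) m, s j) / (ℓ : ℝ)

/-- `ℓ̄ = max {ℓ' ∈ {1, …, ℓ−1} : s_{ℓ'} > s_{ℓ+1}}`. -/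
noncomputable def lbar (s : ℕ → ℝ) (ℓ : ℕ) : ℕ :=
  ((Finset.Icc 1 (ℓ - 1)).filter (fun t => s (ℓ + 1) < s t)).sup id

/-- The lower-bound quantity `L_s(ℓ)`; when `s ℓ = s (ℓ+1)` the term `1/(s_ℓ − s_{ℓ+1}) − 1`
is interpreted as `∞`, so the `min` reduces to its second argument. -/
noncomputable def Lval (s : ℕ → ℝ) (n m ℓ : ℕ) : ℝ :=
  if ℓ = 1 then 1 / (s 1 - s 2) - 1
  else
    let innerMin : ℝ :=
      if h : (Finset.Icc 1 (lbar s ℓ)).Nonempty then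
        (Finset.Icc 1 (lbar s ℓ)).inf' h (fun t =>
          ((⌊(((n : ℝ) - 2) * (upave s 2 - s (m - t + 1)) + 1 - s (m - t)) /
              (s t - s (ℓ + 1))⌋ : ℤ) : ℝ))
      else 0
    if s ℓ = s (ℓ + 1) then innerMin
    else min (1 / (s ℓ - s (ℓ + 1)) - 1) innerMin

lemma posRule_nonempty {m N : ℕ} [NeZero m] (s : ℕ → ℝ) (P : Profile m N) :
    (posRule m s N P).Nonempty := by
  obtain ⟨c, -, hc⟩ := Finset.exists_max_image (Finset.univ : Finset (Fin m)) (posScore s P)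
    ⟨0, Finset.mem_univ _⟩
  exact ⟨c, by simp only [posRule, Finset.mem_filter, Finset.mem_univ, true_and]; intro c'; exact hc c' (Finset.mem_univ _)⟩

lemma exists_perm {m : ℕ} (f : ℕ → ℕ) (hf : ∀ x, x < m → f x < m)
    (hi : ∀ x y, x < m → y < m → f x = f y → x = y) :
    ∃ p : Pref m, ∀ c : Fin m, (p c : ℕ) = f c := by
  refine ⟨Equiv.ofBijective (fun c : Fin m => (⟨f c, hf c c.2⟩ : Fin m)) ?_, fun c => rfl⟩
  apply Finite.injective_iff_bijective.mp
  intro x y hxy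
  apply Fin.ext
  exact hi x y x.2 y.2 (by simpa using hxy)

/-- Voter list: `X`, then `D`, then alternating `A`, `B`. -/
def vlist {m : ℕ} (X D A B : Pref m) : ℕ → Pref m
  | 0 => X
  | 1 => D
  | (j + 2) => if j % 2 = 0 then A else B

lemma vlist_score {m : ℕ} (s : ℕ → ℝ) (X D A B : Pref m) (h : ℕ) (c : Fin m) :
    posScore s (fun j : Fin (2 * h + 2) => vlist X D A B j) c =
      s (X c + 1) + s (D c + 1) + h * (s (A c + 1) + s (B c + 1)) := by
  unfold posScore
  rw [← Finset.sum_range (fun j => s ((vlist X D A B j c : ℕ) + 1))]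
  induction h with
  | zero => simp [Finset.sum_range_succ, vlist]
  | succ h ih =>
    rw [show 2 * (h + 1) + 2 = (2 * h + 2) + 1 + 1 by ring, Finset.sum_range_succ,
      Finset.sum_range_succ, ih]
    have e1 : vlist X D A B (2 * h + 2) = A := by simp [vlist]
    have e2 : vlist X D A B (2 * h + 2 + 1) = B := by
      show (if (2 * h + 1) % 2 = 0 then A else B) = B
      rw [if_neg (by omega)]
    rw [e1, e2]
    push_cast
    ring

lemma addCopies_score {m n : ℕ} (s : ℕ → ℝ) (P : Profile m n) (i : Fin n) (k : ℕ) (c : Fin m) :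
    posScore s (addCopies P i k) c = posScore s P c + k * s (P i c + 1) := by
  unfold posScore
  rw [Fin.sum_univ_add]
  simp [addCopies]

lemma key (m h : ℕ) [NeZero m] (hm : 3 ≤ m)
    (s : ℕ → ℝ) (hs1 : s 1 = 1) (hsm : s m = 0)
    (hanti : ∀ i j : ℕ, 1 ≤ i → i ≤ j → j ≤ m → s j ≤ s i)
    (hbig : s 2 ≤ (h + 1) * (1 - s 2)) (ℓ k : ℕ) (hl1 : 1 ≤ ℓ) (hlm : ℓ < m)
    (hk : ((k : ℝ) + 1) * (s ℓ - s (ℓ + 1)) < 1)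
    (ht : ∀ t, 1 ≤ t → t < ℓ → ((k : ℝ) + 1) * (s t - s (ℓ + 1)) ≤
      h * (1 + s 2 - 2 * s (m - t + 1)) + 1 - s (m - t)) :
    ¬ kASP m (2 * h + 2) (posRule m s) k := by
  obtain ⟨A, hA⟩ := exists_perm (m := m) (fun c => if c + 1 = ℓ then 0 else if c = ℓ then 1 else
    if c < ℓ then m - 1 - c else m + 1 - c) (by intro x hx; split_ifs <;> omega)
    (by intro x y hx hy hxy; split_ifs at hxy <;> omega)
  obtain ⟨B, hB⟩ := exists_perm (m := m) (fun c => if c + 1 = ℓ then 1 else if c = ℓ then 0 else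
    if c < ℓ then m - 1 - c else m + 1 - c) (by intro x hx; split_ifs <;> omega)
    (by intro x y hx hy hxy; split_ifs at hxy <;> omega)
  obtain ⟨D, hD⟩ := exists_perm (m := m) (fun c => if c + 1 = ℓ then m - 1 else if c = ℓ then 0 else
    if c < ℓ then m - 2 - c else m - c) (by intro x hx; split_ifs <;> omega)
    (by intro x y hx hy hxy; split_ifs at hxy <;> omega)
  obtain ⟨Q, hQ⟩ := exists_perm (m := m) (fun c => if c + 1 = ℓ then 0 else if c = ℓ then m - 1 else
    if c < ℓ then c + 1 else c - 1) (by intro x hx; split_ifs <;> omega)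
    (by intro x y hx hy hxy; split_ifs at hxy <;> omega)
  intro H
  let P : Profile m (2 * h + 2) := fun j => vlist (Equiv.refl _) D A B j
  have hP0 : P 0 = Equiv.refl _ := rfl
  have hupd : Function.update P 0 Q = fun j : Fin (2 * h + 2) => vlist Q D A B j := by
    funext j
    by_cases hj : j = 0
    · subst hj; simp [vlist]
    · rw [Function.update_of_ne hj]
      have : (j : ℕ) ≠ 0 := fun h0 => hj (Fin.ext h0)
      obtain ⟨j, hj'⟩ := j
      match j, hj', this with
      | 1, _, _ => rfl
      | (j + 2), _, _ => rfl
  have H1 := H A P 0 Q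
  rw [hupd, hP0] at H1
  set a : Fin m := ⟨ℓ - 1, by omega⟩ with ha
  set b : Fin m := ⟨ℓ, hlm⟩ with hb
  have h0 : (0 : ℝ) ≤ h := Nat.cast_nonneg _
  have k0 : (0 : ℝ) ≤ k := Nat.cast_nonneg _
  have ea : ℓ - 1 + 1 = ℓ := by omega
  have em : m - 1 + 1 = m := by omega
  have Aa : (A a : ℕ) = 0 := by rw [hA]; simp [ha, ea]
  have Ab : (A b : ℕ) = 1 := by rw [hA]; simp [hb]
  have Ba : (B a : ℕ) = 1 := by rw [hB]; simp [ha, ea]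
  have Bb : (B b : ℕ) = 0 := by rw [hB]; simp [hb]
  have Da : (D a : ℕ) = m - 1 := by rw [hD]; simp [ha, ea]
  have Db : (D b : ℕ) = 0 := by rw [hD]; simp [hb]
  have Qa : (Q a : ℕ) = 0 := by rw [hQ]; simp [ha, ea]
  have Qb : (Q b : ℕ) = m - 1 := by rw [hQ]; simp [hb]
  have s32 := hanti 2 3 (by omega) (by omega) hm
  -- manipulated winner is `a`
  have hman : tiebreak A (posRule m s (2 * h + 2) (fun j => vlist Q D A B j)) = a := by
    have hmem : a ∈ posRule m s (2 * h + 2) (fun j => vlist Q D A B j) := by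
      simp only [posRule, Finset.mem_filter, Finset.mem_univ, true_and]
      intro c
      rw [vlist_score, vlist_score, Aa, Ba, Da, Qa, em]
      by_cases hca : c = a
      · rw [hca, Aa, Ba, Da, Qa, em]
      by_cases hcb : c = b
      · rw [hcb, Ab, Bb, Db, Qb, em]
        norm_num
        linarith
      have c1 : (c : ℕ) + 1 ≠ ℓ := fun e => hca (Fin.ext (by simp [ha]; omega))
      have c2 : (c : ℕ) ≠ ℓ := fun e => hcb (Fin.ext (by simp [hb]; omega))
      have cm := c.2
      have e1 : s (Q c + 1) ≤ s 2 := hanti _ _ (by omega)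
        (by rw [hQ]; split_ifs <;> omega) (by omega)
      have e2 : s (D c + 1) ≤ s 2 := hanti _ _ (by omega)
        (by rw [hD]; split_ifs <;> omega) (by omega)
      have e3 : s (A c + 1) ≤ s 2 := hanti _ _ (by omega)
        (by rw [hA]; split_ifs <;> omega) (by omega)
      have e4 : s (B c + 1) ≤ s 2 := hanti _ _ (by omega)
        (by rw [hB]; split_ifs <;> omega) (by omega)
      have e5 : (h : ℝ) * (s (A c + 1) + s (B c + 1)) ≤ h * (s 2 + s 2) :=
        mul_le_mul_of_nonneg_left (by linarith) h0
      norm_num [hs1, hsm]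
      nlinarith
    have := (tiebreak_spec A _ (posRule_nonempty s (fun j : Fin (2 * h + 2) => vlist Q D A B j))).2 a hmem
    apply A.injective
    apply Fin.ext
    have := Fin.le_def.mp this
    omega
  rw [hman] at H1
  obtain ⟨w1, w2⟩ := tiebreak_spec A _ (posRule_nonempty s (addCopies P 0 k))
  set w := tiebreak A (posRule m s (2 * h + 2 + k) (addCopies P 0 k)) with hw
  have hwl : (w : ℕ) + 1 ≤ ℓ := by
    have := Fin.le_def.mp H1
    simp [ha] at this
    omega
  have w3 : ∀ c, posScore s (addCopies P 0 k) c ≤ posScore s (addCopies P 0 k) w := by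
    simpa only [posRule, Finset.mem_filter, Finset.mem_univ, true_and] using w1
  have hsc : ∀ c : Fin m, posScore s (addCopies P 0 k) c =
      (k + 1) * s (c + 1) + s (D c + 1) + h * (s (A c + 1) + s (B c + 1)) := by
    intro c
    rw [addCopies_score, vlist_score]
    simp only [hP0, Equiv.refl_apply]
    ring
  have hscb : posScore s (addCopies P 0 k) b = (k + 1) * s (ℓ + 1) + 1 + h * (1 + s 2) := by
    rw [hsc, Ab, Bb, Db]
    simp only [zero_add, hs1, hb]
    norm_num
    left
    ring
  have wb := w3 b
  by_cases hwa : (w : ℕ) + 1 = ℓ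
  · have : w = a := Fin.ext (by simp [ha]; omega)
    rw [this, hscb, hsc, Aa, Ba, Da, em] at wb
    simp only [ha, ea] at wb
    norm_num [hs1, hsm] at wb
    nlinarith
  · have hwl' : (w : ℕ) + 1 < ℓ := by omega
    have t1 := ht (w + 1) (by omega) hwl'
    have wA : (A w : ℕ) + 1 = m - (w + 1) + 1 := by
      rw [hA]; split_ifs <;> omega
    have wB : (B w : ℕ) + 1 = m - (w + 1) + 1 := by
      rw [hB]; split_ifs <;> omega
    have wD : (D w : ℕ) + 1 = m - (w + 1) := by
      rw [hD]; split_ifs <;> omega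
    have hle : posScore s (addCopies P 0 k) w ≤ posScore s (addCopies P 0 k) b := by
      rw [hscb, hsc, wA, wB, wD]
      linarith
    have hbm : b ∈ posRule m s (2 * h + 2 + k) (addCopies P 0 k) := by
      simp only [posRule, Finset.mem_filter, Finset.mem_univ, true_and]
      exact fun c => (w3 c).trans hle
    have := Fin.le_def.mp (w2 b hbm)
    have : (A w : ℕ) ≤ 1 := by omega
    omega

/-- For any positional scoring rule with `s 1 ≠ s 2`, even `n` with
`n ≥ 2 s_2 / (1 − s_2)`: the rule is not `k`-augmentation strategyproof for any
`k < max_{ℓ ∈ {1,…,m−1}} L_s(ℓ)`, and `Φ(F_s) ≥ max_ℓ L_s(ℓ)`. -/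
theorem posRule_not_kASP_of_lt_Lval (m n : ℕ) [NeZero m] (hm : 3 ≤ m) (hn : 2 ≤ n)
    (s : ℕ → ℝ) (hs1 : s 1 = 1) (hsm : s m = 0)
    (hmono : ∀ j : ℕ, 1 ≤ j → j < m → s (j + 1) ≤ s j)
    (hs12 : s 1 ≠ s 2) (hneven : Even n) (hnbig : 2 * s 2 / (1 - s 2) ≤ (n : ℝ)) :
    (∀ k : ℕ,
        (k : ℝ) < (Finset.Icc 1 (m - 1)).sup' (Finset.nonempty_Icc.mpr (by omega))
          (fun ℓ => Lval s n m ℓ) →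
        ¬ kASP m n (posRule m s) k) ∧
    (∀ k : ℕ,
        (k : ℝ) < (Finset.Icc 1 (m - 1)).sup' (Finset.nonempty_Icc.mpr (by omega))
          (fun ℓ => Lval s n m ℓ) →
        (k : ℕ∞) < manipPot m n (posRule m s)) := by
  have hanti : ∀ i j : ℕ, 1 ≤ i → i ≤ j → j ≤ m → s j ≤ s i := by
    intro i j hi hij
    induction j, hij using Nat.le_induction with
    | base => intro _; exact le_rfl
    | succ j hj ih => intro hjm; exact (hmono j (by omega) (by omega)).trans (ih (by omega))
  have hs2 : s 2 < 1 := by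
    have := hanti 1 2 le_rfl (by omega) (by omega)
    rw [hs1] at this hs12
    exact lt_of_le_of_ne this (Ne.symm hs12)
  obtain ⟨h, hh⟩ : ∃ h, n = 2 * h + 2 := by
    obtain ⟨r, hr⟩ := hneven
    exact ⟨r - 1, by omega⟩
  subst hh
  have h0 : (0 : ℝ) ≤ h := Nat.cast_nonneg _
  have main : ∀ k : ℕ,
        (k : ℝ) < (Finset.Icc 1 (m - 1)).sup' (Finset.nonempty_Icc.mpr (by omega))
          (fun ℓ => Lval s (2 * h + 2) m ℓ) →
        ¬ kASP m (2 * h + 2) (posRule m s) k := by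
    intro k hk
    obtain ⟨ℓ, hl, hkl⟩ := (Finset.lt_sup'_iff _).mp hk
    obtain ⟨hl1, hl2⟩ := Finset.mem_Icc.mp hl
    have k0 : (0 : ℝ) ≤ k := Nat.cast_nonneg _
    have hbig : s 2 ≤ (h + 1) * (1 - s 2) := by
      rw [div_le_iff₀ (by linarith)] at hnbig
      push_cast at hnbig
      linarith
    have hdiv : ∀ x : ℝ, 0 < x → (k : ℝ) < 1 / x - 1 → ((k : ℝ) + 1) * x < 1 := by
      intro x hx h1
      rw [← lt_div_iff₀ hx]
      linarith
    have hll := hmono ℓ hl1 (by omega)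
    apply key m h hm s hs1 hsm hanti hbig ℓ k hl1 (by omega)
    · unfold Lval at hkl
      by_cases e : ℓ = 1
      · subst e
        rw [if_pos rfl] at hkl
        exact hdiv _ (by linarith) hkl
      · rw [if_neg e] at hkl
        dsimp only at hkl
        by_cases e2 : s ℓ = s (ℓ + 1)
        · rw [e2]; simp
        · rw [if_neg e2] at hkl
          exact hdiv _ (sub_pos.mpr (lt_of_le_of_ne hll (Ne.symm e2))) (lt_min_iff.mp hkl).1
    · intro t ht1 htl
      have b1 : s (m - t + 1) ≤ s 2 := hanti _ _ (by omega) (by omega) (by omega)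
      have b2 : s (m - t) ≤ s 2 := hanti _ _ (by omega) (by omega) (by omega)
      have hup : upave s 2 = (1 + s 2) / 2 := by
        unfold upave
        rw [show Finset.Icc 1 2 = {1, 2} by rfl]
        simp [hs1]
      by_cases e : s (ℓ + 1) < s t
      · have htb : t ∈ Finset.Icc 1 (lbar s ℓ) := by
          refine Finset.mem_Icc.mpr ⟨ht1, ?_⟩
          unfold lbar
          exact Finset.le_sup (f := id)
            (Finset.mem_filter.mpr ⟨Finset.mem_Icc.mpr ⟨ht1, by omega⟩, e⟩)
        unfold Lval at hkl
        rw [if_neg (by omega)] at hkl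
        dsimp only at hkl
        rw [dif_pos ⟨t, htb⟩] at hkl
        have hin := lt_of_lt_of_le hkl (show _ ≤ _ by
          split_ifs
          · exact le_rfl
          · exact min_le_right _ _)
        have hin2 := (Finset.lt_inf'_iff _).mp hin t htb
        have hin3 : ((k : ℤ) + 1) ≤ ⌊((((2 * h + 2 : ℕ) : ℝ) - 2) * (upave s 2 - s (m - t + 1)) + 1 - s (m - t)) /
              (s t - s (ℓ + 1))⌋ := by
          have : (k : ℤ) < ⌊((((2 * h + 2 : ℕ) : ℝ) - 2) * (upave s 2 - s (m - t + 1)) + 1 - s (m - t)) /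
              (s t - s (ℓ + 1))⌋ := by exact_mod_cast hin2
          omega
        rw [Int.le_floor, le_div_iff₀ (by linarith), hup] at hin3
        push_cast at hin3
        linarith
      · have c1 : ((k : ℝ) + 1) * (s t - s (ℓ + 1)) ≤ 0 :=
          mul_nonpos_of_nonneg_of_nonpos (by linarith) (by linarith)
        have c2 : 0 ≤ (h : ℝ) * (1 + s 2 - 2 * s (m - t + 1)) := mul_nonneg h0 (by linarith)
        linarith
  refine ⟨main, ?_⟩
  intro k hk
  have hle : ((k + 1 : ℕ) : ℕ∞) ≤ manipPot m (2 * h + 2) (posRule m s) := by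
    unfold manipPot
    apply le_sInf
    rintro _ ⟨K, hK, rfl⟩
    have : k + 1 ≤ K := by
      by_contra hc
      exact main k hk (hK k (by omega))
    exact Nat.cast_le.mpr this
  exact lt_of_lt_of_le (by exact_mod_cast Nat.lt_succ_self k) hle
end

section
/- Let F_s be a positional scoring rule that is neither Plurality nor Borda Count, and let n ≥ 4 be divisible by 4. Then either Φ(F_s) > Φ(Borda) or Φ(F_s) ≥ Φ(Plur). Furthermore, if additionally n ≥ max(8, 2/s_2 + 4), then either Φ(F_s) > Φ(Borda) or Φ(F_s) > Φ(Plur). -/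
open Finset

lemma exists_pref {m : ℕ} (f : Fin m → ℕ) (hf : ∀ c, f c < m)
    (hinj : ∀ c d, f c = f d → c = d) : ∃ p : Pref m, ∀ c, (p c : ℕ) = f c := by
  have hi : Function.Injective (fun c => (⟨f c, hf c⟩ : Fin m)) := by
    intro c d hcd
    exact hinj c d (by simpa using hcd)
  exact ⟨Equiv.ofBijective _ (Finite.injective_iff_bijective.1 hi), fun c => rfl⟩

lemma tiebreak_eq {m : ℕ} [NeZero m] (τ : Pref m) (A : Finset (Fin m)) (x : Fin m)
    (hx : x ∈ A) (hmin : ∀ y ∈ A, τ x ≤ τ y) : tiebreak τ A = x := by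
  have hne : A.Nonempty := ⟨x, hx⟩
  unfold tiebreak
  rw [dif_pos hne]
  rw [Equiv.symm_apply_eq]
  apply le_antisymm
  · exact Finset.min'_le _ _ (Finset.mem_image_of_mem _ hx)
  · apply Finset.le_min'
    intro y hy
    obtain ⟨c, hc, rfl⟩ := Finset.mem_image.1 hy
    exact hmin c hc

lemma score_addCopies {m n : ℕ} (s : ℕ → ℝ) (P : Profile m n) (i : Fin n) (k : ℕ) (c : Fin m) :
    posScore s (addCopies P i k) c = posScore s P c + k * s ((P i c : ℕ) + 1) := by
  unfold posScore
  rw [Fin.sum_univ_add]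
  simp [addCopies]

lemma score_update {m n : ℕ} (s : ℕ → ℝ) (P : Profile m n) (i : Fin n) (q : Pref m) (c : Fin m) :
    posScore s (Function.update P i q) c
      = posScore s P c - s ((P i c : ℕ) + 1) + s ((q c : ℕ) + 1) := by
  unfold posScore
  rw [← Finset.add_sum_erase _ _ (Finset.mem_univ i),
    ← Finset.add_sum_erase _ (fun j => s ((P j c : ℕ) + 1)) (Finset.mem_univ i)]
  have : ∑ x ∈ univ.erase i, s (((Function.update P i q) x c : ℕ) + 1)
      = ∑ x ∈ univ.erase i, s ((P x c : ℕ) + 1) := by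
    apply Finset.sum_congr rfl
    intro x hx
    rw [Function.update_of_ne (Finset.ne_of_mem_erase hx)]
  rw [this]
  simp only [Function.update_self]
  ring

lemma exists_profile {m n hA hB : ℕ} (hn : n = 2 + hA + hB) (s : ℕ → ℝ) (p0 W A B : Pref m) :
    ∃ (P : Profile m n) (i : Fin n), P i = p0 ∧ ∀ c, posScore s P c =
      s ((p0 c : ℕ) + 1) + s ((W c : ℕ) + 1) + hA * s ((A c : ℕ) + 1)
        + hB * s ((B c : ℕ) + 1) := by
  subst hn
  refine ⟨Fin.append (Fin.append ![p0, W] (fun _ => A)) (fun _ => B),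
    Fin.castAdd hB (Fin.castAdd hA 0), ?_, ?_⟩
  · rw [Fin.append_left, Fin.append_left]; rfl
  · intro c
    unfold posScore
    rw [Fin.sum_univ_add, Fin.sum_univ_add]
    simp [Fin.append_left, Fin.append_right]

/-- Core: sufficient numeric conditions for failure. -/
lemma not_kASP_core {m n hA hB k : ℕ} [NeZero m] (hn : n = 2 + hA + hB) (s : ℕ → ℝ)
    (p0 W A B q τ : Pref m) (a b : Fin m) (hab : p0 a < p0 b)
    (tr : ∀ c, s ((W c : ℕ) + 1) + hA * s ((A c : ℕ) + 1) + hB * s ((B c : ℕ) + 1)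
        + (k + 1) * s ((p0 c : ℕ) + 1) ≤ s ((W b : ℕ) + 1) + hA * s ((A b : ℕ) + 1)
        + hB * s ((B b : ℕ) + 1) + (k + 1) * s ((p0 b : ℕ) + 1))
    (trt : ∀ c, τ c < τ b → s ((W c : ℕ) + 1) + hA * s ((A c : ℕ) + 1) + hB * s ((B c : ℕ) + 1)
        + (k + 1) * s ((p0 c : ℕ) + 1) < s ((W b : ℕ) + 1) + hA * s ((A b : ℕ) + 1)
        + hB * s ((B b : ℕ) + 1) + (k + 1) * s ((p0 b : ℕ) + 1))
    (ma : ∀ c, s ((W c : ℕ) + 1) + hA * s ((A c : ℕ) + 1) + hB * s ((B c : ℕ) + 1)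
        + s ((q c : ℕ) + 1) ≤ s ((W a : ℕ) + 1) + hA * s ((A a : ℕ) + 1)
        + hB * s ((B a : ℕ) + 1) + s ((q a : ℕ) + 1))
    (mat : ∀ c, τ c < τ a → s ((W c : ℕ) + 1) + hA * s ((A c : ℕ) + 1) + hB * s ((B c : ℕ) + 1)
        + s ((q c : ℕ) + 1) < s ((W a : ℕ) + 1) + hA * s ((A a : ℕ) + 1)
        + hB * s ((B a : ℕ) + 1) + s ((q a : ℕ) + 1)) :
    ¬ kASP m n (posRule m s) k := by
  intro hk
  obtain ⟨P, i, hPi, hP⟩ := exists_profile hn s p0 W A B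
  have h := hk τ P i q
  rw [tiebreak_eq τ _ b, tiebreak_eq τ _ a, hPi] at h
  · exact absurd hab (not_lt.2 h)
  · simp only [posRule, Finset.mem_filter, Finset.mem_univ, true_and]
    intro c
    simp only [score_update, hP, hPi]
    linarith [ma c]
  · intro c hc
    simp only [posRule, Finset.mem_filter, Finset.mem_univ, true_and] at hc
    by_contra hlt
    have h1 := mat c (not_le.1 hlt)
    have h2 := hc a
    simp only [score_update, hP, hPi] at h2
    linarith
  · simp only [posRule, Finset.mem_filter, Finset.mem_univ, true_and]
    intro c
    simp only [score_addCopies, hP, hPi]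
    linarith [tr c]
  · intro c hc
    simp only [posRule, Finset.mem_filter, Finset.mem_univ, true_and] at hc
    by_contra hlt
    have h1 := trt c (not_le.1 hlt)
    have h2 := hc b
    simp only [score_addCopies, hP, hPi] at h2
    linarith

lemma lt_manipPot {m n k : ℕ} [NeZero m] (F : SCC m) (h : ¬ kASP m n F k) :
    (k : ℕ∞) < manipPot m n F := by
  have : ((k + 1 : ℕ) : ℕ∞) ≤ manipPot m n F := by
    unfold manipPot
    apply le_sInf
    rintro _ ⟨k0, hk0, rfl⟩
    have : k + 1 ≤ k0 := by
      by_contra hlt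
      exact h (hk0 k (by omega))
    exact Nat.cast_le.2 this
  refine lt_of_lt_of_le ?_ this
  exact_mod_cast Nat.lt_succ_self k

lemma exists_small_drop (m : ℕ) (hm : 3 ≤ m) (s : ℕ → ℝ) (hs1 : s 1 = 1) (hsm : s m = 0)
    (hnotborda : ¬ ∀ j : ℕ, 1 ≤ j → j ≤ m → s j = ((m : ℝ) - j) / ((m : ℝ) - 1)) :
    ∃ j, 1 ≤ j ∧ j < m ∧ s j - s (j + 1) < 1 / ((m : ℝ) - 1) ∧
      ∀ i, 1 ≤ i → i < j → 1 / ((m : ℝ) - 1) ≤ s i - s (i + 1) := by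
  have hex : ∃ j, 1 ≤ j ∧ j < m ∧ s j - s (j + 1) < 1 / ((m : ℝ) - 1) := by
    by_contra hcon
    push Not at hcon
    apply hnotborda
    have key : ∀ i, 1 ≤ i → ∀ d, i + d ≤ m → d * (1 / ((m : ℝ) - 1)) ≤ s i - s (i + d) := by
      intro i hi d
      induction d with
      | zero => simp
      | succ d ih =>
        intro hd
        have h1 := ih (by omega)
        have h2 := hcon (i + d) (by omega) (by omega)
        push_cast
        rw [← add_assoc]
        linarith
    intro j hj hjm
    have h1 := key 1 le_rfl (j - 1) (by omega)
    have h2 := key j hj (m - j) (by omega)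
    rw [show 1 + (j - 1) = j by omega] at h1
    rw [show j + (m - j) = m by omega] at h2
    rw [Nat.cast_sub hj] at h1
    rw [Nat.cast_sub hjm] at h2
    have hm' : (3 : ℝ) ≤ m := by exact_mod_cast hm
    have e : ((m : ℝ) - 1) * (1 / ((m : ℝ) - 1)) = 1 := by
      field_simp [show (m : ℝ) - 1 ≠ 0 by linarith]
    rw [div_eq_mul_one_div]
    push_cast at h1
    apply le_antisymm <;> nlinarith
  classical
  refine ⟨Nat.find hex, (Nat.find_spec hex).1, (Nat.find_spec hex).2.1,
    (Nat.find_spec hex).2.2, ?_⟩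
  intro i hi hij
  by_contra hlt
  exact Nat.find_min hex hij ⟨hi, by have := (Nat.find_spec hex).2.1; omega, not_le.1 hlt⟩

/-- The truthful inequality for the candidates ranked above `a` and `b`. -/
lemma truth_ineq (m h t j l : ℕ) (hm : 3 ≤ m) (s : ℕ → ℝ) (hs1 : s 1 = 1) (hsm : s m = 0)
    (hanti : ∀ i i', 1 ≤ i → i ≤ i' → i' ≤ m → s i' ≤ s i)
    (hjm : j < m) (hdj : s j - s (j + 1) < 1 / ((m : ℝ) - 1))
    (hdi : ∀ i, 1 ≤ i → i < j → 1 / ((m : ℝ) - 1) ≤ s i - s (i + 1))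
    (hl : 1 ≤ l) (hlj : l < j)
    (ht : (t ≤ h + 1 ∧ 1 ≤ h) ∨ (t ≤ h + 2 ∧ 3 ≤ h ∧ 1 ≤ ((h : ℝ) - 1) * s 2)) :
    t * (s l - s (j + 1)) + s (m - l) + 2 * h * s (m + 1 - l) ≤ 1 + h * (1 + s 2) := by
  have hm' : (3 : ℝ) ≤ m := by exact_mod_cast hm
  obtain ⟨δ, hδ⟩ : ∃ δ : ℝ, δ = 1 / ((m : ℝ) - 1) := ⟨_, rfl⟩
  rw [← hδ] at hdj hdi
  have hδ0 : 0 < δ := by rw [hδ]; apply one_div_pos.2; linarith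
  have e : (m : ℝ) * δ = 1 + δ := by
    rw [hδ]; field_simp [show (m : ℝ) - 1 ≠ 0 by linarith]; ring
  have key : ∀ i, 1 ≤ i → ∀ d, i + d ≤ j → d * δ ≤ s i - s (i + d) := by
    intro i hi d
    induction d with
    | zero => simp
    | succ d ih =>
      intro hd
      have h1 := ih (by omega)
      have h2 := hdi (i + d) (by omega) (by omega)
      push_cast
      rw [← add_assoc]
      linarith
  have key' : ∀ i i', 1 ≤ i → i ≤ i' → i' ≤ j → (i' - i : ℝ) * δ ≤ s i - s i' := by
    intro i i' hi hii hi'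
    have := key i hi (i' - i) (by omega)
    rwa [show i + (i' - i) = i' by omega, Nat.cast_sub hii] at this
  have hy0 : 0 ≤ s (j + 1) := by rw [← hsm]; exact hanti _ _ (by omega) (by omega) le_rfl
  have hs2 : s 2 ≤ 1 := by rw [← hs1]; exact hanti _ _ (by omega) (by omega) (by omega)
  have hsl : s l ≤ 1 := by rw [← hs1]; exact hanti _ _ (by omega) (by omega) (by omega)
  have hyl : s (j + 1) ≤ s l := hanti _ _ (by omega) (by omega) (by omega)
  have hy2 : s (j + 1) ≤ s 2 := hanti _ _ (by omega) (by omega) (by omega)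
  have hu : (l - 1 : ℝ) * δ ≤ 1 - s l := by
    have := key' 1 l le_rfl hl (by omega)
    rw [hs1] at this; exact_mod_cast this
  have hh1 : (1 : ℝ) ≤ h := by
    have : 1 ≤ h := by omega
    exact_mod_cast this
  rcases Nat.eq_or_lt_of_le hl with hl1 | hl2
  · -- l = 1
    subst hl1
    rw [show m + 1 - 1 = m by omega, hsm, hs1]
    have hz' : s (m - 1) ≤ s 2 := hanti _ _ (by omega) (by omega) (by omega)
    rw [hs1] at hyl
    rcases ht with ⟨ht, hh⟩ | ⟨ht, hh, hs⟩
    · have ht' : (t : ℝ) ≤ h + 1 := by exact_mod_cast ht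
      have h1 := mul_le_mul_of_nonneg_right ht' (sub_nonneg.2 hyl)
      nlinarith
    · have ht' : (t : ℝ) ≤ h + 2 := by exact_mod_cast ht
      have h1 := mul_le_mul_of_nonneg_right ht' (sub_nonneg.2 hyl)
      nlinarith
  have hl2' : (2 : ℝ) ≤ l := by exact_mod_cast hl2
  have hs2l : s l ≤ s 2 := hanti _ _ (by omega) (by omega) (by omega)
  have hzz : s (m + 1 - l) ≤ s (m - l) := hanti _ _ (by omega) (by omega) (by omega)
  have huδ : δ ≤ 1 - s l := by nlinarith
  rcases Nat.lt_or_ge j (m - l) with hc | hc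
  · have hz' : s (m - l) ≤ s (j + 1) := hanti _ _ (by omega) (by omega) (by omega)
    have h2 : (h : ℝ) * s (m + 1 - l) ≤ h * s (j + 1) := by
      apply mul_le_mul_of_nonneg_left _ (by linarith); linarith
    rcases ht with ⟨ht, hh⟩ | ⟨ht, hh, hs⟩
    · have ht' : (t : ℝ) ≤ h + 1 := by exact_mod_cast ht
      have h1 := mul_le_mul_of_nonneg_right ht' (sub_nonneg.2 hyl)
      nlinarith
    · have ht' : (t : ℝ) ≤ h + 2 := by exact_mod_cast ht
      have h1 := mul_le_mul_of_nonneg_right ht' (sub_nonneg.2 hyl)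
      have h3 : (h : ℝ) * (s l - s 2) ≤ 0 := by nlinarith
      have h4 : 0 ≤ ((h : ℝ) - 1) * (1 - s (j + 1)) := by
        apply mul_nonneg <;> linarith
      nlinarith
  rcases Nat.eq_or_lt_of_le hc with hc1 | hc2
  · rw [hc1, show m + 1 - l = j + 1 by omega]
    rcases ht with ⟨ht, hh⟩ | ⟨ht, hh, hs⟩
    · have ht' : (t : ℝ) ≤ h + 1 := by exact_mod_cast ht
      have h1 := mul_le_mul_of_nonneg_right ht' (sub_nonneg.2 hyl)
      have h3 : (h : ℝ) * (s l - 1) ≤ 0 := by nlinarith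
      have h4 : (h : ℝ) * (s (j + 1) - s 2) ≤ 0 := by nlinarith
      nlinarith
    · have ht' : (t : ℝ) ≤ h + 2 := by exact_mod_cast ht
      have h1 := mul_le_mul_of_nonneg_right ht' (sub_nonneg.2 hyl)
      have h3 : (h : ℝ) * (s l - s 2) ≤ 0 := by nlinarith
      have h4 : 0 ≤ ((h : ℝ) - 1) * (1 - s (j + 1)) := by
        apply mul_nonneg <;> linarith
      nlinarith
  · have hlm : l ≤ m := by omega
    have hz1 := key' 1 (m + 1 - l) le_rfl (by omega) (by omega)
    have hz'1 := key' 1 (m - l) le_rfl (by omega) (by omega)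
    have hz2 := key' 2 (m + 1 - l) (by omega) (by omega) (by omega)
    rw [Nat.cast_sub (by omega)] at hz1 hz2 hz'1
    rw [hs1] at hz1 hz'1
    push_cast at hz1 hz2 hz'1
    have hlm2 : (l : ℝ) + 2 ≤ m := by
      have : l + 2 ≤ m := by omega
      exact_mod_cast this
    have g1 : s (m + 1 - l) ≤ (l - 1) * δ := by linarith
    have g2 : s (m - l) ≤ l * δ := by linarith
    have g3 : 1 - l * δ ≤ s 2 - s (m + 1 - l) := by linarith
    have g4 : (l : ℝ) * δ + δ ≤ 1 := by
      have := mul_le_mul_of_nonneg_right hlm2 hδ0.le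
      linarith
    rcases ht with ⟨ht, hh⟩ | ⟨ht, hh, hs⟩
    · have ht' : (t : ℝ) ≤ h + 1 := by exact_mod_cast ht
      have h1 := mul_le_mul_of_nonneg_right ht' (sub_nonneg.2 hyl)
      have h5 : 1 * δ ≤ (h : ℝ) * ((1 - s l - s (m + 1 - l)) + (s 2 - s (m + 1 - l))
          + s (j + 1)) := by
        apply mul_le_mul hh1 _ hδ0.le (by linarith)
        linarith
      linarith
    · have ht' : (t : ℝ) ≤ h + 2 := by exact_mod_cast ht
      have h1 := mul_le_mul_of_nonneg_right ht' (sub_nonneg.2 hyl)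
      have hh3 : (3 : ℝ) ≤ h := by exact_mod_cast hh
      have h5 : 3 * (1 - l * δ) ≤ (h : ℝ) * ((1 - s l - s (m + 1 - l))
          + (s 2 - s (m + 1 - l)) + s (j + 1)) := by
        apply mul_le_mul hh3 _ (by linarith) (by linarith)
        linarith
      linarith

lemma main_fail (m h k : ℕ) [NeZero m] (hm : 3 ≤ m) (hodd : h % 2 = 1)
    (s : ℕ → ℝ) (hs1 : s 1 = 1) (hsm : s m = 0)
    (hmono : ∀ j : ℕ, 1 ≤ j → j < m → s (j + 1) ≤ s j)
    (hnotborda : ¬ ∀ j : ℕ, 1 ≤ j → j ≤ m → s j = ((m : ℝ) - j) / ((m : ℝ) - 1))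
    (hkm : k + 1 ≤ m - 1)
    (ht : (k + 1 ≤ h + 1 ∧ 1 ≤ h) ∨ (k + 1 ≤ h + 2 ∧ 3 ≤ h ∧ 1 ≤ ((h : ℝ) - 1) * s 2)) :
    ¬ kASP m (2 * h + 2) (posRule m s) k := by
  have hanti : ∀ i i', 1 ≤ i → i ≤ i' → i' ≤ m → s i' ≤ s i := by
    intro i i' hi hii
    induction i', hii using Nat.le_induction with
    | base => intro _; exact le_rfl
    | succ x hx ih =>
      intro hxm
      exact (hmono x (by omega) (by omega)).trans (ih (by omega))
  obtain ⟨j, hj1, hjm, hdj, hdi⟩ := exists_small_drop m hm s hs1 hsm hnotborda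
  have tineq := fun l hl hlj => truth_ineq m h (k + 1) j l hm s hs1 hsm hanti hjm hdj hdi hl hlj ht
  obtain ⟨J, rfl⟩ : ∃ J, j = J + 1 := ⟨j - 1, by omega⟩
  obtain ⟨B, hB⟩ := exists_pref (m := m) (fun c => if (c : ℕ) < J then m - 1 - c else
      if (c : ℕ) = J then 1 else if (c : ℕ) = J + 1 then 0 else m + 1 - c)
    (by intro c; split_ifs <;> omega)
    (by intro c d hcd; apply Fin.ext; split_ifs at hcd <;> omega)
  obtain ⟨A, hA⟩ := exists_pref (m := m) (fun c => if (c : ℕ) < J then m - 1 - c else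
      if (c : ℕ) = J then 0 else if (c : ℕ) = J + 1 then 1 else m + 1 - c)
    (by intro c; split_ifs <;> omega)
    (by intro c d hcd; apply Fin.ext; split_ifs at hcd <;> omega)
  obtain ⟨W, hW⟩ := exists_pref (m := m) (fun c => if (c : ℕ) < J then m - 2 - c else
      if (c : ℕ) = J then m - 1 else if (c : ℕ) = J + 1 then 0 else m - c)
    (by intro c; split_ifs <;> omega)
    (by intro c d hcd; apply Fin.ext; split_ifs at hcd <;> omega)
  obtain ⟨q, hq⟩ := exists_pref (m := m) (fun c => if (c : ℕ) < J then m - 2 - c else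
      if (c : ℕ) = J then 0 else if (c : ℕ) = J + 1 then m - 1 else m - c)
    (by intro c; split_ifs <;> omega)
    (by intro c d hcd; apply Fin.ext; split_ifs at hcd <;> omega)
  obtain ⟨a, ha⟩ : ∃ a : Fin m, (a : ℕ) = J := ⟨⟨J, by omega⟩, rfl⟩
  obtain ⟨b, hb⟩ : ∃ b : Fin m, (b : ℕ) = J + 1 := ⟨⟨J + 1, by omega⟩, rfl⟩
  have hBa : (B a : ℕ) = 1 := by simp [hB, ha]
  have hBb : (B b : ℕ) = 0 := by simp [hB, hb]
  have hAa : (A a : ℕ) = 0 := by simp [hA, ha]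
  have hAb : (A b : ℕ) = 1 := by simp [hA, hb]
  have hWa : (W a : ℕ) + 1 = m := by simp [hW, ha]; omega
  have hWb : (W b : ℕ) = 0 := by simp [hW, hb]
  have hqa : (q a : ℕ) = 0 := by simp [hq, ha]
  have hqb : (q b : ℕ) + 1 = m := by simp [hq, hb]; omega
  have hm' : (3 : ℝ) ≤ m := by exact_mod_cast hm
  have hδ0 : 0 < 1 / ((m : ℝ) - 1) := by apply one_div_pos.2; linarith
  have hs20 : 0 ≤ s 2 := by rw [← hsm]; exact hanti _ _ (by omega) (by omega) le_rfl
  have hs21 : s 2 ≤ 1 := by rw [← hs1]; exact hanti _ _ (by omega) (by omega) (by omega)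
  have hh0 : (0 : ℝ) ≤ h := Nat.cast_nonneg h
  have hk0 : (0 : ℝ) ≤ k := Nat.cast_nonneg k
  have hle2 : ∀ x : ℕ, 2 ≤ x → x ≤ m → s x ≤ s 2 := fun x h1 h2 => hanti 2 x (by omega) h1 h2
  -- facts about other candidates
  have oth : ∀ c : Fin m, c ≠ a → c ≠ b →
      s ((B c : ℕ) + 1) = s ((A c : ℕ) + 1) ∧ s ((A c : ℕ) + 1) ≤ s 2 ∧
      s ((W c : ℕ) + 1) ≤ s 2 ∧ s ((q c : ℕ) + 1) ≤ s 2 ∧ s ((A c : ℕ) + 1) ≤ s ((W c : ℕ) + 1) ∧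
      (k + 1) * s ((c : ℕ) + 1) + s ((W c : ℕ) + 1) + 2 * h * s ((A c : ℕ) + 1)
        ≤ (k + 1) * s (J + 2) + 1 + h * (1 + s 2) := by
    intro c hca hcb
    have hca' : (c : ℕ) ≠ J := fun hh => hca (Fin.ext (by omega))
    have hcb' : (c : ℕ) ≠ J + 1 := fun hh => hcb (Fin.ext (by omega))
    have hcm := c.2
    have eA : (A c : ℕ) = if (c : ℕ) < J then m - 1 - c else m + 1 - c := by
      rw [hA]; simp [hca', hcb']
    have eB : (B c : ℕ) = if (c : ℕ) < J then m - 1 - c else m + 1 - c := by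
      rw [hB]; simp [hca', hcb']
    have eW : (W c : ℕ) = if (c : ℕ) < J then m - 2 - c else m - c := by
      rw [hW]; simp [hca', hcb']
    have eq : (q c : ℕ) = if (c : ℕ) < J then m - 2 - c else m - c := by
      rw [hq]; simp [hca', hcb']
    have p1 : s ((A c : ℕ) + 1) ≤ s 2 := hle2 _ (by rw [eA]; split_ifs <;> omega) (A c).2
    have p2 : s ((W c : ℕ) + 1) ≤ s 2 := hle2 _ (by rw [eW]; split_ifs <;> omega) (W c).2
    refine ⟨by rw [eA, eB], p1, p2, hle2 _ (by rw [eq]; split_ifs <;> omega) (q c).2,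
      hanti _ _ (by omega) (by rw [eA, eW]; split_ifs <;> omega) (A c).2, ?_⟩
    by_cases hcJ : (c : ℕ) < J
    · have := tineq (c + 1) (by omega) (by omega)
      rw [eA, eW, if_pos hcJ, if_pos hcJ, show m - 2 - (c : ℕ) + 1 = m - (c + 1) by omega,
        show m - 1 - (c : ℕ) + 1 = m + 1 - (c + 1) by omega]
      rw [Nat.cast_add, Nat.cast_one] at this
      rw [show J + 1 + 1 = J + 2 by omega] at this
      linarith
    · have h1 : s ((c : ℕ) + 1) ≤ s (J + 2) := hanti _ _ (by omega) (by omega) (by omega)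
      have h2 : ((k : ℝ) + 1) * s ((c : ℕ) + 1) ≤ (k + 1) * s (J + 2) :=
        mul_le_mul_of_nonneg_left h1 (by linarith)
      have h3 : (h : ℝ) * s ((A c : ℕ) + 1) ≤ h * s 2 := mul_le_mul_of_nonneg_left p1 hh0
      have h4 : (h : ℝ) * s 2 ≤ h * 1 := mul_le_mul_of_nonneg_left hs21 hh0
      linarith
  have hkd : ((k : ℝ) + 1) * (s (J + 1) - s (J + 2)) < 1 := by
    have h1 : (k : ℝ) + 1 ≤ m - 1 := by
      have : k + 1 + 1 ≤ m := by omega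
      have : ((k + 1 + 1 : ℕ) : ℝ) ≤ m := by exact_mod_cast this
      push_cast at this; linarith
    calc ((k : ℝ) + 1) * (s (J + 1) - s (J + 2))
        < (k + 1) * (1 / ((m : ℝ) - 1)) := mul_lt_mul_of_pos_left hdj (by linarith)
      _ ≤ (m - 1) * (1 / ((m : ℝ) - 1)) := mul_le_mul_of_nonneg_right h1 hδ0.le
      _ = 1 := by field_simp [show (m : ℝ) - 1 ≠ 0 by linarith]
  have hdj1 : s (J + 1) - s (J + 2) ≤ 1 - s 2 := by
    rcases Nat.eq_zero_or_pos J with h0 | h0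
    · subst h0; simp [hs1]
    · have := hdi 1 le_rfl (by omega)
      rw [hs1] at this
      norm_num at this hdj ⊢
      linarith
  have hdj0 : 0 ≤ s (J + 1) - s (J + 2) := sub_nonneg.2 (hmono (J + 1) (by omega) hjm)
  have hkh : (k : ℝ) + 1 ≤ h + 2 := by
    have : k + 1 ≤ h + 2 := by omega
    exact_mod_cast this
  have hab : (1 : Pref m) a < (1 : Pref m) b := by
    simp only [Equiv.Perm.one_apply]; exact Fin.lt_def.2 (by omega)
  rcases le_or_gt 1 (((h : ℝ) + 2) * (1 - s 2)) with hcase | hcase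
  · -- w construction, tie-break a, b
    have hτ : ∀ c, A c < A b → c = a := by
      intro c hc
      have : (A c : ℕ) < 1 := by rw [← hAb]; exact hc
      apply A.injective; apply Fin.ext; omega
    refine not_kASP_core (hA := h) (hB := h) (by omega) s 1 W A B q A a b hab ?_ ?_ ?_ ?_
    · intro c
      simp only [Equiv.Perm.one_apply]
      by_cases hca : c = a
      · subst hca
        rw [hWa, hAa, hBa, hWb, hAb, hBb, ha, hb]
        norm_num [hs1, hsm]
        linarith
      by_cases hcb : c = b
      · subst hcb; exact le_rfl
      obtain ⟨o1, o2, o3, o4, o5, o6⟩ := oth c hca hcb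
      rw [o1, hWb, hAb, hBb, hb]
      norm_num [hs1, hsm]
      linarith
    · intro c hc
      rw [hτ c hc]
      simp only [Equiv.Perm.one_apply]
      rw [hWa, hAa, hBa, hWb, hAb, hBb, ha, hb]
      norm_num [hs1, hsm]
      linarith
    · intro c
      by_cases hca : c = a
      · subst hca; exact le_rfl
      by_cases hcb : c = b
      · subst hcb
        rw [hWa, hAa, hBa, hWb, hAb, hBb, hqa, hqb]
        norm_num [hs1, hsm]
        linarith
      obtain ⟨o1, o2, o3, o4, o5, o6⟩ := oth c hca hcb
      rw [o1, hWa, hAa, hBa, hqa]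
      norm_num [hs1, hsm]
      have h3 : (h : ℝ) * s ((A c : ℕ) + 1) ≤ h * s 2 := mul_le_mul_of_nonneg_left o2 hh0
      linarith
    · intro c hc
      have : (A c : ℕ) < A a := hc
      omega
  · -- r construction, tie-break b, a
    obtain ⟨e, rfl⟩ : ∃ e, h = 2 * e + 1 := ⟨h / 2, by omega⟩
    push_cast at *
    have he : (0 : ℝ) ≤ e := Nat.cast_nonneg e
    refine not_kASP_core (hA := e) (hB := 3 * e + 2) (by omega) s 1 B A B q B a b hab ?_ ?_ ?_ ?_
    · intro c
      simp only [Equiv.Perm.one_apply]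
      by_cases hca : c = a
      · subst hca
        rw [hAa, hBa, hAb, hBb, ha, hb]
        norm_num [hs1, hsm]
        have h1 := mul_le_mul_of_nonneg_right hkh hdj0
        have h2 := mul_le_mul_of_nonneg_left hdj1 (show (0 : ℝ) ≤ 2 * e + 1 + 2 by linarith)
        linarith
      by_cases hcb : c = b
      · subst hcb; exact le_rfl
      obtain ⟨o1, o2, o3, o4, o5, o6⟩ := oth c hca hcb
      rw [o1, hAb, hBb, hb]
      norm_num [hs1, hsm]
      have h2 : (e : ℝ) * s 2 ≤ e * 1 := mul_le_mul_of_nonneg_left hs21 he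
      linarith
    · intro c hc
      have : (B c : ℕ) < B b := hc
      omega
    · intro c
      by_cases hca : c = a
      · subst hca; exact le_rfl
      by_cases hcb : c = b
      · subst hcb
        rw [hAa, hBa, hAb, hBb, hqa, hqb]
        norm_num [hs1, hsm]
        linarith
      obtain ⟨o1, o2, o3, o4, o5, o6⟩ := oth c hca hcb
      rw [o1, hAa, hBa, hqa]
      norm_num [hs1, hsm]
      have h3 : (e : ℝ) * s ((A c : ℕ) + 1) ≤ e * s 2 := mul_le_mul_of_nonneg_left o2 he
      have h4 : (e : ℝ) * s 2 ≤ e * 1 := mul_le_mul_of_nonneg_left hs21 he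
      linarith
    · intro c hc
      have hcb : c = b := by
        have : (B c : ℕ) < 1 := by rw [← hBa]; exact hc
        apply B.injective; apply Fin.ext; omega
      subst hcb
      rw [hAa, hBa, hAb, hBb, hqa, hqb]
      norm_num [hs1, hsm]
      linarith

/-- Let `F_s` be a positional scoring rule that is neither Plurality
(`s = (1,0,…,0)`) nor Borda Count (`s_j = (m−j)/(m−1)`), and let `n ≥ 4` be divisible
by `4`. Then either `Φ(F_s) > Φ(Borda) = m − 2` or `Φ(F_s) ≥ Φ(Plur) = ⌈(n−1)/2⌉`;
and if additionally `n ≥ max(8, 2/s_2 + 4)`, then either `Φ(F_s) > m − 2` or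
`Φ(F_s) > ⌈(n−1)/2⌉`. -/
theorem posRule_manipPot_vs_borda_plurality (m n : ℕ) [NeZero m] (hm : 3 ≤ m)
    (hn4 : 4 ≤ n) (hdvd : 4 ∣ n)
    (s : ℕ → ℝ) (hs1 : s 1 = 1) (hsm : s m = 0)
    (hmono : ∀ j : ℕ, 1 ≤ j → j < m → s (j + 1) ≤ s j)
    (hnotplur : ¬ ∀ j : ℕ, 1 ≤ j → j ≤ m → s j = if j = 1 then 1 else 0)
    (hnotborda : ¬ ∀ j : ℕ, 1 ≤ j → j ≤ m → s j = ((m : ℝ) - j) / ((m : ℝ) - 1)) :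
    (((m - 2 : ℕ) : ℕ∞) < manipPot m n (posRule m s) ∨
      (((n - 1 + 1) / 2 : ℕ) : ℕ∞) ≤ manipPot m n (posRule m s)) ∧
    (max 8 (2 / s 2 + 4) ≤ (n : ℝ) →
      (((m - 2 : ℕ) : ℕ∞) < manipPot m n (posRule m s) ∨
        (((n - 1 + 1) / 2 : ℕ) : ℕ∞) < manipPot m n (posRule m s))) := by
  obtain ⟨h, rfl⟩ : ∃ h, n = 2 * h + 2 := ⟨n / 2 - 1, by omega⟩
  have hodd : h % 2 = 1 := by omega
  have main := fun k => main_fail m h k hm hodd s hs1 hsm hmono hnotborda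
  rw [show (2 * h + 2 - 1 + 1) / 2 = h + 1 by omega]
  have first : ∀ k : ℕ, k + 1 ≤ m - 1 → k ≤ h → (k : ℕ∞) < manipPot m (2 * h + 2) (posRule m s) :=
    fun k h1 h2 => lt_manipPot _ (main k h1 (Or.inl ⟨by omega, by omega⟩))
  constructor
  · by_cases hmh : m - 2 ≤ h
    · exact Or.inl (first (m - 2) (by omega) hmh)
    · right
      have := first h (by omega) le_rfl
      have h2 := Order.add_one_le_of_lt this
      exact_mod_cast h2
  · intro hn
    by_cases hmh : m - 2 ≤ h
    · exact Or.inl (first (m - 2) (by omega) hmh)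
    · right
      have h8 := (le_max_left _ _).trans hn
      have h2 := (le_max_right _ _).trans hn
      have h8' : 8 ≤ 2 * h + 2 := by exact_mod_cast h8
      push_cast at h2
      have hanti : ∀ x, 2 ≤ x → x ≤ m → s x ≤ s 2 := by
        intro x hx
        induction x, hx using Nat.le_induction with
        | base => intro _; exact le_rfl
        | succ x hx ih =>
          intro hxm
          exact (hmono x (by omega) (by omega)).trans (ih (by omega))
      have hanti' : ∀ d, d < m → 0 ≤ s (m - d) := by
        intro d
        induction d with
        | zero => intro _; simp [hsm]
        | succ d ih =>
          intro hd
          have h3 := hmono (m - (d + 1)) (by omega) (by omega)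
          rw [show m - (d + 1) + 1 = m - d by omega] at h3
          exact (ih (by omega)).trans h3
      have hpos : 0 < s 2 := by
        by_contra hle
        apply hnotplur
        intro x hx hxm
        split_ifs with hx1
        · rw [hx1, hs1]
        · have h3 := hanti x (by omega) hxm
          have h4 := hanti' (m - x) (by omega)
          rw [show m - (m - x) = x by omega] at h4
          linarith
      refine lt_manipPot _ (main (h + 1) (by omega) (Or.inr ⟨by omega, by omega, ?_⟩))
      have h5 : 2 / s 2 ≤ 2 * ((h : ℝ) - 1) := by linarith
      rw [div_le_iff₀ hpos] at h5
      linarith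
end
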